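/- arXiv:0801.1493 — 11 statements merged into one kernel-verified Lean document; each statement's English description precedes it below -/
import Mathlib

section
/- For every natural number m and every nonzero polynomial P in m+2 variables with complex coefficients, there exists a point x ∈ ℂ that is not a nonpositive integer such that P(x, Γ(x), Γ'(x), …, Γ^{(m)}(x)) ≠ 0. In other words, the Gamma function satisfies no nonzero polynomial differential equation with complex coefficients (Hölder's theorem). -/
/-!
Differentiating `Γ(x + 1) = x Γ(x)` gives `Γ⁽ʲ⁾(x + 1) = x Γ⁽ʲ⁾(x) + j Γ⁽ʲ⁻¹⁾(x)`. The proof uses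
only this recursion, at the points `x = 1, 2, 3, …`, together with `Γ(x) ≠ 0` there: no nonzero
polynomial `P(X, Y₀, …, Yₘ)` vanishes at `(n, Γ(n), …, Γ⁽ᵐ⁾(n))` for all large `n`
(`eq_zero_of_eventually`).

Let `I` be the set of `P ∈ ℂ[X][Y₀, …, Yₘ]` vanishing at these points for all large `n`. It is an
ideal, stable under the substitution `S : X ↦ X + 1, Yⱼ ↦ X Yⱼ + j Yⱼ₋₁` (`shiftHom`). Suppose `I`
contains a nonzero polynomial. Order monomials in the `Y`s lexicographically with
`Y₀ < Y₁ < ⋯ < Yₘ`, and choose a nonzero `Q ∈ I` with smallest leading monomial `Y^α` and then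
smallest degree of the leading coefficient `q ∈ ℂ[X]`. Minimality implies that `Q` is divisible
neither by any `X - c` nor by `Y₀`, since these are nonzero at the points in question for all
large `n`.

As `S` is triangular, `S Q` has leading term `X^|α| q(X + 1) Y^α` (`degree_shiftHom_le`), so
`q · S Q - X^|α| q(X + 1) · Q` is an element of `I` with smaller leading monomial, hence zero.
Because no `X - c` divides `Q`, it follows that `q` divides `X^|α| q(X + 1)` (`dvd_of_mul_eq`),
and therefore `S Q = R Q` for some `R ∈ ℂ[X]` of degree `|α|`.

* If `|α| = 0`, then `Q = q(X)` has infinitely many roots.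
* If `R` has a root `ρ ≠ 0`, then `Q(ρ + 1, ·)` vanishes on the image of the bijective linear map
  `y ↦ (ρ yⱼ + j yⱼ₋₁)ⱼ`, so `X - (ρ + 1)` divides `Q`.
* If `R` has the root `0`, the same argument shows that `Q(1, ·)` vanishes on the hyperplane
  `Y₀ = 0`. Applying `S Q = R Q` at `X = 1, 2, …` carries this over to `Q(n, ·)` for all `n ≥ 1`,
  so `Y₀` divides `Q`.

Each case is a contradiction.
-/

namespace HolderGamma

open MvPolynomial Filter

/-! ### The shift -/

/-- The vector `(x yⱼ + j yⱼ₋₁)ⱼ`, with `y₋₁ = 0`. It expresses the jet of `Γ` at `x + 1` in terms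
of the jet `y` of `Γ` at `x`; the ring `A` is either `ℂ` or a polynomial ring. -/
def shiftVec {A : Type*} [CommRing A] {m : ℕ} (x : A) (y : Fin (m + 1) → A) : Fin (m + 1) → A :=
  fun j => x * y j + Fin.cases (motive := fun _ => A) 0
    (fun i : Fin m => ((i : ℕ) + 1 : A) * y i.castSucc) j

/-- Evaluation of an element of `ℂ[X][Y₀, …, Yₘ]` at `X = c` and `Yⱼ = y j`. -/
noncomputable def ev {m : ℕ} (c : ℂ) (y : Fin (m + 1) → ℂ) :
    MvPolynomial (Fin (m + 1)) (Polynomial ℂ) →+* ℂ :=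
  eval₂Hom (Polynomial.evalRingHom c) y

/-- The endomorphism of `ℂ[X][Y₀, …, Yₘ]` sending `X` to `X + 1` and `Yⱼ` to `X Yⱼ + j Yⱼ₋₁`. -/
noncomputable def shiftHom (m : ℕ) :
    MvPolynomial (Fin (m + 1)) (Polynomial ℂ) →+* MvPolynomial (Fin (m + 1)) (Polynomial ℂ) :=
  eval₂Hom (C.comp (Polynomial.compRingHom (Polynomial.X + 1)))
    (shiftVec (C Polynomial.X) X)

variable {m : ℕ}

lemma shiftVec_zero {A : Type*} [CommRing A] (x : A) (y : Fin (m + 1) → A) :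
    shiftVec x y 0 = x * y 0 := by simp [shiftVec]

lemma shiftVec_succ {A : Type*} [CommRing A] (x : A) (y : Fin (m + 1) → A) (i : Fin m) :
    shiftVec x y i.succ = x * y i.succ + ((i : ℕ) + 1 : A) * y i.castSucc := by
  simp [shiftVec]

lemma ev_C (c : ℂ) (y : Fin (m + 1) → ℂ) (p : Polynomial ℂ) : ev c y (C p) = p.eval c := by
  simp [ev]

lemma ev_X (c : ℂ) (y : Fin (m + 1) → ℂ) (j : Fin (m + 1)) : ev c y (X j) = y j := by
  simp [ev]

lemma ev_shiftHom (c : ℂ) (y : Fin (m + 1) → ℂ)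
    (P : MvPolynomial (Fin (m + 1)) (Polynomial ℂ)) :
    ev c y (shiftHom m P) = ev (c + 1) (shiftVec c y) P := by
  have : (ev c y).comp (shiftHom m) = ev (c + 1) (shiftVec c y) := by
    apply MvPolynomial.ringHom_ext
    · intro p
      simp [ev, shiftHom, Polynomial.eval_comp]
    · intro j
      refine Fin.cases ?_ (fun i => ?_) j
      · simp [shiftHom, ev_X, ev_C, shiftVec_zero]
      · simp [shiftHom, ev_X, ev_C, shiftVec_succ]
  exact DFunLike.congr_fun this P

/-! ### Vanishing and divisibility in `ℂ[X][Y₀, …, Yₘ]` -/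

lemma eq_zero_of_ev {P : MvPolynomial (Fin (m + 1)) (Polynomial ℂ)}
    (h : ∀ c y, ev c y P = 0) : P = 0 := by
  ext1 γ
  refine Polynomial.funext fun c => ?_
  have : MvPolynomial.map (Polynomial.evalRingHom c) P = 0 := by
    refine MvPolynomial.funext fun y => ?_
    rw [eval_map, map_zero]
    exact h c y
  simpa [coeff_map] using congrArg (coeff γ) this

lemma dvd_of_ev_eq_zero {c : ℂ} {P : MvPolynomial (Fin (m + 1)) (Polynomial ℂ)}
    (h : ∀ y, ev c y P = 0) : C (Polynomial.X - Polynomial.C c) ∣ P := by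
  rw [C_dvd_iff_dvd_coeff]
  intro γ
  rw [Polynomial.dvd_iff_isRoot]
  have : MvPolynomial.map (Polynomial.evalRingHom c) P = 0 := by
    refine MvPolynomial.funext fun y => ?_
    rw [eval_map, map_zero]
    exact h y
  simpa [coeff_map] using congrArg (coeff γ) this

lemma X_zero_dvd {P : MvPolynomial (Fin (m + 1)) (Polynomial ℂ)}
    (h : ∀ c y, y 0 = 0 → ev c y P = 0) : X 0 ∣ P := by
  -- `φ` substitutes `0` for `Y₀`.
  let φ : MvPolynomial (Fin (m + 1)) (Polynomial ℂ) →+*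
    MvPolynomial (Fin (m + 1)) (Polynomial ℂ) := eval₂Hom C (Function.update X 0 0)
  have hφ : φ P = 0 := by
    refine eq_zero_of_ev fun c y => ?_
    have : (ev c y).comp φ = ev c (Function.update y 0 0) := by
      apply MvPolynomial.ringHom_ext
      · intro p; simp [φ, ev]
      · intro j
        by_cases hj : j = 0
        · subst hj; simp [φ, ev_X]
        · simp [φ, ev_X, hj]
    have h2 := DFunLike.congr_fun this P
    rw [RingHom.comp_apply] at h2
    rw [h2]
    exact h _ _ (by simp)
  -- Modulo `Y₀`, the substitution `Y₀ ↦ 0` is the identity.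
  have key : (Ideal.Quotient.mk (Ideal.span {X 0})).comp φ =
      Ideal.Quotient.mk (Ideal.span {(X 0 : MvPolynomial (Fin (m + 1)) (Polynomial ℂ))}) := by
    apply MvPolynomial.ringHom_ext
    · intro p; simp [φ]
    · intro j
      by_cases hj : j = 0
      · subst hj
        simp [φ]
      · simp [φ, hj]
  have h3 := DFunLike.congr_fun key P
  rw [RingHom.comp_apply, hφ, map_zero] at h3
  exact Ideal.mem_span_singleton.1 (Ideal.Quotient.eq_zero_iff_mem.1 h3.symm)

lemma shiftVec_surjective {c : ℂ} (hc : c ≠ 0) (z : Fin (m + 1) → ℂ) :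
    ∃ y, shiftVec c y = z := by
  let y : Fin (m + 1) → ℂ := fun j => Fin.induction (motive := fun _ => ℂ) (z 0 / c)
    (fun i yi => (z i.succ - ((i : ℕ) + 1 : ℂ) * yi) / c) j
  have hy0 : y 0 = z 0 / c := rfl
  have hy (i : Fin m) : y i.succ = (z i.succ - ((i : ℕ) + 1 : ℂ) * y i.castSucc) / c := rfl
  refine ⟨y, funext fun j => ?_⟩
  refine Fin.cases ?_ (fun i => ?_) j
  · rw [shiftVec_zero, hy0]; field_simp
  · rw [shiftVec_succ, hy]; field_simp; ring

/-- At `x = 0` the shift has the hyperplane `z₀ = 0` as its image. -/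
lemma exists_shiftVec_zero (z : Fin (m + 1) → ℂ) (hz : z 0 = 0) :
    ∃ y, shiftVec (0 : ℂ) y = z := by
  refine ⟨fun j => if h : (j : ℕ) < m then z (Fin.succ ⟨j, h⟩) / ((j : ℕ) + 1) else 0,
    funext fun j => ?_⟩
  refine Fin.cases ?_ (fun i => ?_) j
  · rw [shiftVec_zero, hz, zero_mul]
  · have : ((i : ℕ) + 1 : ℂ) ≠ 0 := Nat.cast_add_one_ne_zero _
    rw [shiftVec_succ]
    simp
    field_simp

/-- A form of Gauss's lemma: a polynomial `P` divisible by no `X - c` is primitive over `ℂ[X]`, so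
every `q ∈ ℂ[X]` dividing `r P` divides `r`. -/
lemma dvd_of_mul_eq {A P : MvPolynomial (Fin (m + 1)) (Polynomial ℂ)}
    (hP : ∀ c : ℂ, ¬ C (Polynomial.X - Polynomial.C c) ∣ P) {q r : Polynomial ℂ} (hq : q ≠ 0)
    (h : C q * A = C r * P) : q ∣ r := by
  induction hn : q.natDegree generalizing q r with
  | zero =>
    rw [Polynomial.eq_C_of_natDegree_eq_zero hn] at hq ⊢
    exact (Polynomial.isUnit_C.2 (by simpa using hq)).dvd
  | succ n ih =>
    obtain ⟨c, hc⟩ := IsAlgClosed.exists_root q (by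
      rw [Polynomial.degree_eq_natDegree hq, hn]; exact_mod_cast n.succ_ne_zero)
    obtain ⟨q', rfl⟩ := Polynomial.dvd_iff_isRoot.2 hc
    have hprime : Prime (C (Polynomial.X - Polynomial.C c) :
        MvPolynomial (Fin (m + 1)) (Polynomial ℂ)) :=
      (prime_C_iff _).2 (Polynomial.prime_X_sub_C c)
    have hdvd : (C (Polynomial.X - Polynomial.C c) :
        MvPolynomial (Fin (m + 1)) (Polynomial ℂ)) ∣ C r * P :=
      ⟨C q' * A, by rw [← h, C_mul, mul_assoc]⟩
    have hr : Polynomial.X - Polynomial.C c ∣ r := by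
      have := (C_dvd_iff_dvd_coeff _ _).1 ((hprime.dvd_or_dvd hdvd).resolve_right (hP c)) 0
      simpa using this
    obtain ⟨r', rfl⟩ := hr
    have hq' : q' ≠ 0 := right_ne_zero_of_mul hq
    refine mul_dvd_mul_left _ (ih hq' ?_ ?_)
    · refine mul_left_cancel₀ hprime.ne_zero ?_
      simpa only [C_mul, mul_assoc] using h
    · rw [Polynomial.natDegree_mul (Polynomial.X_sub_C_ne_zero c) hq',
        Polynomial.natDegree_X_sub_C] at hn
      omega

/-! ### Leading terms under the shift -/

section LeadingTerm

variable (mo : MonomialOrder (Fin (m + 1)))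

lemma degree_shiftVec (hmo : ∀ i : Fin m,
      mo.toSyn (Finsupp.single i.castSucc 1) < mo.toSyn (Finsupp.single i.succ 1))
    (j : Fin (m + 1)) :
    mo.degree (shiftVec (C Polynomial.X : MvPolynomial (Fin (m + 1)) (Polynomial ℂ)) X j) =
        Finsupp.single j 1 ∧
      mo.leadingCoeff (shiftVec (C Polynomial.X : MvPolynomial (Fin (m + 1)) (Polynomial ℂ)) X j) =
        Polynomial.X := by
  have hd (j : Fin (m + 1)) :
      mo.degree (C Polynomial.X * X j : MvPolynomial (Fin (m + 1)) (Polynomial ℂ)) =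
        Finsupp.single j 1 := by
    rw [mo.degree_mul (by simp) (X_ne_zero j), mo.degree_C, mo.degree_X, zero_add]
  have hl (j : Fin (m + 1)) :
      mo.leadingCoeff (C Polynomial.X * X j : MvPolynomial (Fin (m + 1)) (Polynomial ℂ)) =
        Polynomial.X := by
    rw [mo.leadingCoeff_mul, mo.leadingCoeff_C, mo.leadingCoeff_X, mul_one]
  refine Fin.cases ?_ (fun i => ?_) j
  · rw [shiftVec_zero]
    exact ⟨hd 0, hl 0⟩
  · have hlt : mo.toSyn (mo.degree (((i : ℕ) + 1 : MvPolynomial (Fin (m + 1)) (Polynomial ℂ)) *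
        X i.castSucc)) < mo.toSyn (mo.degree
          (C Polynomial.X * X i.succ : MvPolynomial (Fin (m + 1)) (Polynomial ℂ))) := by
      have hcast : ((i : ℕ) + 1 : MvPolynomial (Fin (m + 1)) (Polynomial ℂ)) =
          C ((i : ℕ) + 1 : Polynomial ℂ) := by simp
      rw [hd, hcast, mo.degree_mul (by rw [← hcast]; exact Nat.cast_add_one_ne_zero _)
        (X_ne_zero _), mo.degree_C, mo.degree_X, zero_add]
      exact hmo i
    rw [shiftVec_succ, mo.degree_add_of_lt hlt, mo.leadingCoeff_add_of_lt hlt]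
    exact ⟨hd _, hl _⟩

/-- The leading monomial `Y^α` of `P` bounds that of the shift of `P`, whose coefficient at `Y^α` is
`X^|α| p(X + 1)`, where `p` is the leading coefficient of `P`. -/
lemma degree_shiftHom_le (hmo : ∀ i : Fin m,
      mo.toSyn (Finsupp.single i.castSucc 1) < mo.toSyn (Finsupp.single i.succ 1))
    (P : MvPolynomial (Fin (m + 1)) (Polynomial ℂ)) :
    mo.toSyn (mo.degree (shiftHom m P)) ≤ mo.toSyn (mo.degree P) ∧
      (shiftHom m P).coeff (mo.degree P) =
        Polynomial.X ^ (∑ j, mo.degree P j) * (mo.leadingCoeff P).comp (Polynomial.X + 1) := by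
  let L : Fin (m + 1) → MvPolynomial (Fin (m + 1)) (Polynomial ℂ) :=
    shiftVec (C Polynomial.X) X
  have hL := degree_shiftVec mo hmo
  have hL0 (j) : L j ≠ 0 := by
    rw [← mo.leadingCoeff_ne_zero_iff, (hL j).2]
    exact Polynomial.X_ne_zero
  -- The image of `Y^γ` under the shift has leading term `X^|γ| Y^γ`.
  have hT (γ : Fin (m + 1) →₀ ℕ) : mo.degree (∏ j, L j ^ γ j) = γ := by
    rw [mo.degree_prod fun j _ => pow_ne_zero _ (hL0 j)]
    simp_rw [mo.degree_pow]
    simp only [L, hL]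
    simp
  have hTc (γ : Fin (m + 1) →₀ ℕ) :
      (∏ j, L j ^ γ j).coeff γ = Polynomial.X ^ (∑ j, γ j) := by
    have := mo.coeff_prod_sum_degree (fun j => L j ^ γ j) Finset.univ
    rw [← mo.degree_prod fun j _ => pow_ne_zero _ (hL0 j), hT] at this
    rw [this]
    simp only [mo.leadingCoeff_pow, L, hL]
    exact Finset.prod_pow_eq_pow_sum _ _ _
  have hS : shiftHom m P = ∑ γ ∈ P.support,
      C ((P.coeff γ).comp (Polynomial.X + 1)) * ∏ j, L j ^ γ j := by
    simp [shiftHom, eval₂_eq', L]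
  constructor
  · rw [hS]
    refine mo.degree_sum_le.trans (Finset.sup_le fun γ hγ => ?_)
    refine mo.degree_mul_le.trans ?_
    rw [mo.degree_C, zero_add, hT]
    exact mo.le_degree hγ
  · rw [hS, coeff_sum, Finset.sum_eq_single (mo.degree P)]
    · rw [coeff_C_mul, hTc, mul_comm]
      rfl
    · intro γ hγ hne
      have hlt : mo.toSyn (mo.degree (∏ j, L j ^ γ j)) < mo.toSyn (mo.degree P) := by
        rw [hT]
        exact lt_of_le_of_ne (mo.le_degree hγ) fun h => hne (mo.toSyn.injective h)
      rw [coeff_C_mul, mo.coeff_eq_zero_of_lt hlt, mul_zero]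
    · intro h
      rw [mem_support_iff, not_not] at h
      simp [h]

end LeadingTerm

/-- There is a monomial order with `Y₀ < Y₁ < ⋯ < Yₘ`. -/
lemma exists_monomialOrder (m : ℕ) : ∃ mo : MonomialOrder.{0, 0} (Fin (m + 1)), ∀ i : Fin m,
    mo.toSyn (Finsupp.single i.castSucc 1) < mo.toSyn (Finsupp.single i.succ 1) := by
  -- `MonomialOrder.lex` makes variables of smaller index larger, whence the order dual, whose
  -- underlying type is `Fin (m + 1)` itself.
  refine ⟨(MonomialOrder.lex (σ := (Fin (m + 1))ᵒᵈ)), fun i => ?_⟩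
  have := @Finsupp.Lex.single_lt_iff (Fin (m + 1))ᵒᵈ _ (OrderDual.toDual i.succ)
    (OrderDual.toDual i.castSucc)
  exact this.2 (OrderDual.toDual_lt_toDual.2 i.castSucc_lt_succ)

/-! ### Independence of sequences satisfying the recursion -/

/-- If `y₀(n) ≠ 0` and `yⱼ(n + 1) = n yⱼ(n) + j yⱼ₋₁(n)` for all large `n`, then the sequences
`n, y₀(n), …, yₘ(n)` are algebraically independent over `ℂ`, even as germs at infinity. -/
lemma eq_zero_of_eventually (y : ℕ → Fin (m + 1) → ℂ) (hy0 : ∀ᶠ n in atTop, y n 0 ≠ 0)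
    (hrec : ∀ᶠ n : ℕ in atTop, y (n + 1) = shiftVec (n : ℂ) (y n))
    (P : MvPolynomial (Fin (m + 1)) (Polynomial ℂ))
    (hP : ∀ᶠ n : ℕ in atTop, ev n (y n) P = 0) : P = 0 := by
  by_contra hP0
  obtain ⟨mo, hmo⟩ := exists_monomialOrder m
  let I : Set (MvPolynomial (Fin (m + 1)) (Polynomial ℂ)) :=
    {Q | Q ≠ 0 ∧ ∀ᶠ n : ℕ in atTop, ev n (y n) Q = 0}
  -- Elements of `I` are compared by leading monomial, then by degree of the leading coefficient.
  let μ : MvPolynomial (Fin (m + 1)) (Polynomial ℂ) → mo.syn ×ₗ ℕ :=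
    fun Q => toLex (mo.toSyn (mo.degree Q), (mo.leadingCoeff Q).natDegree)
  obtain ⟨Q, ⟨hQ0, hQ⟩, hmin⟩ : ∃ Q ∈ I, ∀ R ∈ I, ¬ μ R < μ Q := by
    obtain ⟨_, ⟨Q, hQI, rfl⟩, h⟩ := wellFounded_lt.has_min (Set.image μ I) ⟨_, P, ⟨hP0, hP⟩, rfl⟩
    exact ⟨Q, hQI, fun R hR => h _ ⟨R, hR, rfl⟩⟩
  have hmin_deg (R : MvPolynomial (Fin (m + 1)) (Polynomial ℂ))
      (hR : ∀ᶠ n : ℕ in atTop, ev n (y n) R = 0)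
      (hlt : R ≠ 0 → mo.toSyn (mo.degree R) < mo.toSyn (mo.degree Q)) : R = 0 := by
    by_contra hR0
    exact hmin R ⟨hR0, hR⟩ (Prod.Lex.toLex_lt_toLex.2 (.inl (hlt hR0)))
  have hprim (c : ℂ) : ¬ C (Polynomial.X - Polynomial.C c) ∣ Q := by
    rintro ⟨R, hR⟩
    have hc0 := Polynomial.X_sub_C_ne_zero c
    have hR0 : R ≠ 0 := by rintro rfl; simp [hR] at hQ0
    have hC0 : (C (Polynomial.X - Polynomial.C c) :
        MvPolynomial (Fin (m + 1)) (Polynomial ℂ)) ≠ 0 := by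
      simpa only [ne_eq, C_eq_zero] using hc0
    refine hmin R ⟨hR0, ?_⟩ (Prod.Lex.toLex_lt_toLex.2 (.inr ⟨?_, ?_⟩))
    · obtain ⟨N, hN⟩ := exists_nat_gt ‖c‖
      filter_upwards [hQ, eventually_ge_atTop N] with n hn hnN
      rw [hR, map_mul, ev_C] at hn
      refine (mul_eq_zero.1 hn).resolve_left fun h => ?_
      have : (n : ℂ) = c := by simpa [sub_eq_zero] using h
      have h2 : ‖c‖ = n := by rw [← this]; simp
      have h3 : (N : ℝ) ≤ n := by exact_mod_cast hnN
      linarith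
    · rw [hR, mo.degree_mul hC0 hR0, mo.degree_C, zero_add]
    · show (mo.leadingCoeff R).natDegree < (mo.leadingCoeff Q).natDegree
      rw [hR, mo.leadingCoeff_mul, mo.leadingCoeff_C,
        Polynomial.natDegree_mul hc0 (mo.leadingCoeff_ne_zero_iff.2 hR0),
        Polynomial.natDegree_X_sub_C]
      omega
  have hnotX : ¬ X 0 ∣ Q := by
    rintro ⟨R, hR⟩
    have hR0 : R ≠ 0 := by rintro rfl; simp [hR] at hQ0
    refine hR0 (hmin_deg R ?_ fun _ => ?_)
    · filter_upwards [hQ, hy0] with n hn hn0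
      rw [hR, map_mul, ev_X] at hn
      exact (mul_eq_zero.1 hn).resolve_left hn0
    · rw [hR, mo.degree_mul (X_ne_zero 0) hR0, mo.degree_X, map_add]
      refine lt_add_of_pos_left _ (bot_lt_iff_ne_bot.2 ?_)
      rw [mo.bot_eq_zero, ne_eq, EmbeddingLike.map_eq_zero_iff]
      simp
  have hSQ : ∀ᶠ n : ℕ in atTop, ev n (y n) (shiftHom m Q) = 0 := by
    filter_upwards [hrec, (tendsto_add_atTop_nat 1).eventually hQ] with n hn hn1
    rw [ev_shiftHom, ← hn]
    exact_mod_cast hn1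
  set q := mo.leadingCoeff Q with hq
  have hq0 : q ≠ 0 := mo.leadingCoeff_ne_zero_iff.2 hQ0
  set k := ∑ j, mo.degree Q j with hk
  obtain ⟨hdeg, hcoeff⟩ := degree_shiftHom_le mo hmo Q
  rw [← hk, ← hq] at hcoeff
  -- The leading terms of the two sides cancel, so their difference vanishes by minimality.
  have hprop : C q * shiftHom m Q =
      C (Polynomial.X ^ k * q.comp (Polynomial.X + 1)) * Q := by
    rw [← sub_eq_zero]
    refine hmin_deg _ ?_ fun hne => lt_of_le_of_ne ?_ fun heq => ?_
    · filter_upwards [hQ, hSQ] with n h1 h2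
      rw [map_sub, map_mul, map_mul, h1, h2, mul_zero, mul_zero, sub_zero]
    · refine mo.degree_sub_le.trans (sup_le ?_ ?_)
      · refine mo.degree_mul_le.trans ?_
        rwa [mo.degree_C, zero_add]
      · refine mo.degree_mul_le.trans ?_
        rw [mo.degree_C, zero_add]
    · have h := mo.leadingCoeff_ne_zero_iff.2 hne
      rw [MonomialOrder.leadingCoeff, mo.toSyn.injective heq, coeff_sub, coeff_C_mul, coeff_C_mul,
        hcoeff] at h
      exact h (by rw [← MonomialOrder.leadingCoeff, ← hq]; ring)
  obtain ⟨R, hR⟩ := dvd_of_mul_eq hprim hq0 hprop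
  have hSR : shiftHom m Q = C R * Q := by
    refine mul_left_cancel₀ (a := C q) (by simpa using hq0) ?_
    rw [hprop, hR, C_mul, mul_assoc]
  have hX1 : (Polynomial.X + 1 : Polynomial ℂ) = Polynomial.X + Polynomial.C 1 := by simp
  have hqc0 : q.comp (Polynomial.X + 1) ≠ 0 := by
    rw [hX1]
    exact fun h => hq0 (Polynomial.comp_X_add_C_eq_zero_iff.1 h)
  have hR0 : R ≠ 0 := by
    rintro rfl
    rw [mul_zero] at hR
    exact mul_ne_zero (pow_ne_zero _ Polynomial.X_ne_zero) hqc0 hR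
  have hRdeg : R.natDegree = k := by
    have h := congrArg Polynomial.natDegree hR
    rw [Polynomial.natDegree_mul (pow_ne_zero _ Polynomial.X_ne_zero) hqc0,
      Polynomial.natDegree_mul hq0 hR0, hX1, Polynomial.natDegree_comp,
      Polynomial.natDegree_X_add_C, Polynomial.natDegree_X_pow] at h
    omega
  have hfun (c : ℂ) (z : Fin (m + 1) → ℂ) :
      ev (c + 1) (shiftVec c z) Q = R.eval c * ev c z Q := by
    rw [← ev_shiftHom, hSR, map_mul, ev_C]
  -- A constant `R` makes `Q` an element of `ℂ[X]`; otherwise `R` has a root `ρ`, and whether `ρ` is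
  -- zero decides which of `Y₀` and `X - (ρ + 1)` divides `Q`.
  rcases Nat.eq_zero_or_pos k with hk0 | hkpos
  · have hd0 : mo.degree Q = 0 := by
      ext j
      exact (Finset.sum_eq_zero_iff.1 (hk.symm.trans hk0)) j (Finset.mem_univ j)
    have hQC := mo.eq_C_of_degree_eq_zero hd0
    obtain ⟨N, hN⟩ := eventually_atTop.1 hQ
    refine hq0 (Polynomial.eq_zero_of_infinite_isRoot q ?_)
    refine ((Set.Ici_infinite N).image (Nat.cast_injective (R := ℂ)).injOn).mono ?_
    rintro _ ⟨n, hn, rfl⟩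
    have := hN n hn
    rwa [hQC, ev_C] at this
  · obtain ⟨ρ, hρ⟩ := IsAlgClosed.exists_root R (by
      rw [Polynomial.degree_eq_natDegree hR0, hRdeg]; exact_mod_cast hkpos.ne')
    by_cases hρ0 : ρ = 0
    · subst hρ0
      refine hnotX (X_zero_dvd ?_)
      have hnat (n : ℕ) : ∀ z : Fin (m + 1) → ℂ, z 0 = 0 → ev ((n : ℂ) + 1) z Q = 0 := by
        induction n with
        | zero =>
          intro z hz
          obtain ⟨w, rfl⟩ := exists_shiftVec_zero z hz
          rw [Nat.cast_zero, hfun, hρ.eq_zero, zero_mul]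
        | succ n ih =>
          intro z hz
          have hn : ((n + 1 : ℕ) : ℂ) ≠ 0 := Nat.cast_ne_zero.2 n.succ_ne_zero
          obtain ⟨w, rfl⟩ := shiftVec_surjective hn z
          rw [shiftVec_zero] at hz
          rw [hfun, Nat.cast_succ, ih w ((mul_eq_zero.1 hz).resolve_left hn), mul_zero]
      intro c z hz
      -- `p` is `Q(X, z)` for fixed `z`; it vanishes at all positive integers.
      let p : Polynomial ℂ := eval₂Hom (RingHom.id _) (fun j => Polynomial.C (z j)) Q
      have hp (c : ℂ) : p.eval c = ev c z Q := by
        have : (Polynomial.evalRingHom c).comp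
            (eval₂Hom (RingHom.id _) (fun j => Polynomial.C (z j))) = ev c z := by
          apply MvPolynomial.ringHom_ext <;> simp [ev]
        exact DFunLike.congr_fun this Q
      rw [← hp, Polynomial.eq_zero_of_infinite_isRoot p ?_, Polynomial.eval_zero]
      refine (Set.infinite_range_of_injective (f := fun n : ℕ => (n : ℂ) + 1) ?_).mono ?_
      · intro a b hab
        simpa using hab
      · rintro _ ⟨n, rfl⟩
        exact (hp _).trans (hnat n z hz)
    · refine hprim (ρ + 1) (dvd_of_ev_eq_zero fun z => ?_)
      obtain ⟨w, rfl⟩ := shiftVec_surjective hρ0 z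
      rw [hfun, hρ.eq_zero, zero_mul]

/-! ### The Gamma function -/

lemma differentiableAt_iteratedDeriv_Gamma (j : ℕ) {x : ℂ} (hx : 0 < x.re) :
    DifferentiableAt ℂ (iteratedDeriv j Complex.Gamma) x := by
  have hopen : IsOpen {z : ℂ | 0 < z.re} := isOpen_lt continuous_const Complex.continuous_re
  have hdiff : DifferentiableOn ℂ Complex.Gamma {z : ℂ | 0 < z.re} := fun z hz =>
    (Complex.differentiableAt_Gamma z fun n hn => by
      rw [hn] at hz
      simp only [Set.mem_ofPred_eq, Complex.neg_re, Complex.natCast_re] at hz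
      linarith [(Nat.cast_nonneg n : (0 : ℝ) ≤ n)]).differentiableWithinAt
  have : AnalyticAt ℂ Complex.Gamma x := hdiff.analyticAt (hopen.mem_nhds hx)
  rw [iteratedDeriv_eq_iterate]
  exact (this.iterated_deriv j).differentiableAt

/-- The `j`-th derivative of `Γ(x + 1) = x Γ(x)`. For `j = 0` the index `j - 1` is truncated to `0`,
which is harmless since the term is multiplied by `j`. -/
lemma iteratedDeriv_Gamma_add_one (j : ℕ) {x : ℂ} (hx : 0 < x.re) :
    iteratedDeriv j Complex.Gamma (x + 1) =
      x * iteratedDeriv j Complex.Gamma x + j * iteratedDeriv (j - 1) Complex.Gamma x := by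
  induction j generalizing x with
  | zero =>
    have : x ≠ 0 := by rintro rfl; simp at hx
    simp [Complex.Gamma_add_one x this]
  | succ j ih =>
    have hopen : IsOpen {z : ℂ | 0 < z.re} := isOpen_lt continuous_const Complex.continuous_re
    have hev : (fun z => iteratedDeriv j Complex.Gamma (z + 1)) =ᶠ[nhds x] fun z =>
        z * iteratedDeriv j Complex.Gamma z + j * iteratedDeriv (j - 1) Complex.Gamma z := by
      filter_upwards [hopen.mem_nhds hx] with z hz using ih hz
    have h := hev.deriv_eq
    have hd (i : ℕ) := (differentiableAt_iteratedDeriv_Gamma i hx).hasDerivAt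
    rw [deriv_comp_add_const, ← iteratedDeriv_succ] at h
    have h2 := (((hasDerivAt_id' x).mul (hd j)).add ((hd (j - 1)).const_mul (j : ℂ))).deriv
    simp only [← iteratedDeriv_succ] at h2
    replace h := h.trans h2
    rw [h]
    rcases j with _ | j
    · simp; ring
    · simp; ring

/-- The map `ℂ[X₀, …, Xₘ₊₁] → ℂ[X][Y₀, …, Yₘ]` sending `X₀` to `X` and `Xⱼ₊₁` to `Yⱼ`. -/
noncomputable def separate (m : ℕ) :
    MvPolynomial (Fin (m + 2)) ℂ →+* MvPolynomial (Fin (m + 1)) (Polynomial ℂ) :=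
  eval₂Hom (C.comp Polynomial.C)
    (Fin.cases (motive := fun _ => MvPolynomial (Fin (m + 1)) (Polynomial ℂ)) (C Polynomial.X) X)

lemma ev_separate {m : ℕ} (c : ℂ) (y : Fin (m + 1) → ℂ) (P : MvPolynomial (Fin (m + 2)) ℂ) :
    ev c y (separate m P) = MvPolynomial.eval (Fin.cases (motive := fun _ => ℂ) c y) P := by
  have : (ev c y).comp (separate m) = MvPolynomial.eval (Fin.cases (motive := fun _ => ℂ) c y) := by
    apply MvPolynomial.ringHom_ext
    · intro a
      simp [separate, ev]
    · intro j
      refine Fin.cases ?_ (fun i => ?_) j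
      · simp [separate, ev]
      · simp [separate, ev]
  exact DFunLike.congr_fun this P

end HolderGamma

/-- **Hölder's theorem**: the Gamma function satisfies no nonzero polynomial
differential equation with complex coefficients.  For every `m` and every nonzero
polynomial `P` in `m + 2` variables over `ℂ`, there is a point `x ∈ ℂ` that is not a
nonpositive integer at which `P(x, Γ(x), Γ'(x), …, Γ^{(m)}(x)) ≠ 0`. -/
theorem gamma_differentially_transcendental
    (m : ℕ) (P : MvPolynomial (Fin (m + 2)) ℂ) (hP : P ≠ 0) :
    ∃ x : ℂ, (¬∃ n : ℕ, x = -(n : ℂ)) ∧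
      MvPolynomial.eval
        (Fin.cases (motive := fun _ => ℂ) x
          (fun j : Fin (m + 1) => iteratedDeriv (j : ℕ) Complex.Gamma x)) P ≠ 0 := by
  by_contra! hcon
  have hpos (n : ℕ) (hn : 1 ≤ n) : 0 < ((n : ℂ)).re := by
    rw [Complex.natCast_re]; exact_mod_cast hn
  have hsep : HolderGamma.separate m P = 0 := by
    refine HolderGamma.eq_zero_of_eventually
      (fun n j => iteratedDeriv (j : ℕ) Complex.Gamma (n : ℂ)) ?_ ?_ _ ?_
    · filter_upwards [Filter.eventually_ge_atTop 1] with n hn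
      simpa using Complex.Gamma_ne_zero_of_re_pos (hpos n hn)
    · filter_upwards [Filter.eventually_ge_atTop 1] with n hn
      funext j
      rw [Nat.cast_succ, HolderGamma.iteratedDeriv_Gamma_add_one _ (hpos n hn)]
      refine Fin.cases ?_ (fun i => ?_) j
      · simp [HolderGamma.shiftVec_zero]
      · simp [HolderGamma.shiftVec_succ]
    · filter_upwards [Filter.eventually_ge_atTop 1] with n hn
      rw [HolderGamma.ev_separate]
      refine hcon n fun k hk => ?_
      have h := hpos n hn
      rw [hk, Complex.neg_re, Complex.natCast_re] at h
      linarith [(Nat.cast_nonneg k : (0 : ℝ) ≤ k)]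
  refine hP (MvPolynomial.funext fun z => ?_)
  have hz : z = Fin.cases (motive := fun _ => ℂ) (z 0) (fun i => z i.succ) := by
    funext j
    refine Fin.cases rfl (fun i => rfl) j
  rw [hz, ← HolderGamma.ev_separate, hsep, map_zero, map_zero]
end

section
/- Let C be an algebraically closed field of characteristic 0 and let σ be the C-algebra automorphism of the rational function field C(x) determined by σ(x) = x + 1. For every f ∈ C(x) and every nonzero a ∈ C there exist f*, g ∈ C(x) such that pdisp(f*) = 0 and f = f* + σ(g) − a·g. -/
/-!
Work modulo the image of `g ↦ σ g - a g`: there `σ` acts as multiplication by the nonzero scalar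
`a`, so the poles of a fraction may be translated by any integer. Choosing one representative in
each class of `C / ℤ`, let `N` be the space of rational functions whose poles are all
representatives; such functions have polar dispersion `0`. The sum of `N` and the image of
`σ - a` is a subspace stable under `σ` and `σ⁻¹` (`RepPoles.sigma_mem_iff`), so it contains every
fraction `p / (X - α) ^ k` (`RepPoles.pow_mem`). By partial fractions, in the form of a Bézout
relation for coprime factors of the denominator, it is everything.
-/

namespace RepPoles

open Polynomial

variable {C : Type*} [Field C]

/-- The chosen representative of the class of `α` in `C / ℤ`. -/
noncomputable def rep (α : C) : C :=
  (QuotientAddGroup.mk α : C ⧸ AddSubgroup.zmultiples (1 : C)).out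

lemma rep_add_int (α : C) (n : ℤ) : rep (α + n) = rep α := by
  unfold rep
  congr 1
  rw [eq_comm, QuotientAddGroup.eq]
  exact AddSubgroup.mem_zmultiples_iff.2 ⟨n, by simp⟩

lemma exists_eq_rep_add (α : C) : ∃ n : ℤ, α = rep α + n := by
  have h : (QuotientAddGroup.mk (rep α) : C ⧸ AddSubgroup.zmultiples (1 : C)) =
      QuotientAddGroup.mk α := Quotient.out_eq _
  rw [QuotientAddGroup.eq] at h
  obtain ⟨n, hn⟩ := AddSubgroup.mem_zmultiples_iff.1 h
  refine ⟨n, ?_⟩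
  simp only [zsmul_eq_mul, mul_one] at hn
  rw [hn]; ring

lemma rep_rep (α : C) : rep (rep α) = rep α := by
  obtain ⟨n, hn⟩ := exists_eq_rep_add α
  conv_rhs => rw [hn, rep_add_int]

variable (C) in
/-- The space of rational functions whose poles are all chosen representatives of `C / ℤ`. -/
noncomputable def repPoles : Submodule C (RatFunc C) where
  carrier := {f | ∀ α, f.denom.eval α = 0 → rep α = α}
  zero_mem' := by simp
  add_mem' := by
    intro f g hf hg α hα
    have h := eval_eq_zero_of_dvd_of_eval_eq_zero (RatFunc.denom_add_dvd f g) hα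
    rw [eval_mul, mul_eq_zero] at h
    exact h.elim (hf α) (hg α)
  smul_mem' := by
    intro c f hf α hα
    rw [RatFunc.smul_eq_C_mul] at hα
    have h := eval_eq_zero_of_dvd_of_eval_eq_zero (RatFunc.denom_mul_dvd _ f) hα
    rw [RatFunc.denom_C, one_mul] at h
    exact hf α h

lemma div_mem_repPoles (p q : C[X]) (hq : ∀ α, q.eval α = 0 → rep α = α) :
    algebraMap C[X] (RatFunc C) p / algebraMap C[X] (RatFunc C) q ∈ repPoles C := by
  intro α hα
  exact hq α (eval_eq_zero_of_dvd_of_eval_eq_zero (RatFunc.denom_div_dvd p q) hα)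

/-- The linear map `g ↦ σ g - a g`. -/
noncomputable def diffMap (σ : RatFunc C ≃ₐ[C] RatFunc C) (a : C) :
    RatFunc C →ₗ[C] RatFunc C :=
  σ.toLinearMap - a • LinearMap.id

/-- The space of all `fs + (σ g - a g)` with `fs` in `repPoles`. -/
noncomputable def normalizable (σ : RatFunc C ≃ₐ[C] RatFunc C) (a : C) :
    Submodule C (RatFunc C) :=
  repPoles C ⊔ LinearMap.range (diffMap σ a)

variable (σ : RatFunc C ≃ₐ[C] RatFunc C) (a : C)

/-- Modulo `normalizable σ a`, the map `σ` is multiplication by the nonzero scalar `a`. -/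
lemma sigma_mem_iff (ha : a ≠ 0) (f : RatFunc C) :
    σ f ∈ normalizable σ a ↔ f ∈ normalizable σ a := by
  have h : σ f - a • f ∈ normalizable σ a :=
    Submodule.mem_sup_right ⟨f, by simp [diffMap]⟩
  rw [← Submodule.smul_mem_iff _ ha (x := f)]
  exact ⟨fun hf => (Submodule.sub_mem_iff_right _ hf).1 h,
    fun hf => (Submodule.sub_mem_iff_left _ hf).1 h⟩

lemma sigma_algebraMap (hσ : σ RatFunc.X = RatFunc.X + 1) (p : C[X]) :
    σ (algebraMap C[X] (RatFunc C) p) = algebraMap C[X] (RatFunc C) (p.comp (X + 1)) := by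
  have h : (σ : RatFunc C →ₐ[C] RatFunc C).comp (IsScalarTower.toAlgHom C C[X] (RatFunc C)) =
      (IsScalarTower.toAlgHom C C[X] (RatFunc C)).comp (aeval (X + 1)) := by
    apply Polynomial.algHom_ext
    simp [hσ]
  simpa [aeval_def, comp, eval₂_eq_eval_map] using DFunLike.congr_fun h p

/-- Translating the pole `α` by `-1` does not affect membership in `normalizable`; this is the step
of the induction that moves a pole to the representative of its class. -/
lemma shift_mem_iff (hσ : σ RatFunc.X = RatFunc.X + 1) (ha : a ≠ 0) (α : C) (k : ℕ) (p : C[X]) :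
    algebraMap C[X] (RatFunc C) (p.comp (X + 1)) /
        algebraMap C[X] (RatFunc C) ((X - Polynomial.C (α - 1)) ^ k) ∈ normalizable σ a ↔
      algebraMap C[X] (RatFunc C) p /
        algebraMap C[X] (RatFunc C) ((X - Polynomial.C α) ^ k) ∈ normalizable σ a := by
  rw [← sigma_mem_iff σ a ha (_ / algebraMap C[X] (RatFunc C) ((X - Polynomial.C α) ^ k)),
    map_div₀ σ, sigma_algebraMap σ hσ, sigma_algebraMap σ hσ]
  have : ((X - Polynomial.C α) ^ k).comp (X + 1) = (X - Polynomial.C (α - 1)) ^ k := by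
    simp only [pow_comp, sub_comp, X_comp, C_comp, C_sub, C_1]
    ring
  rw [this]

/-- Fractions with a single pole, which may be translated to its representative. -/
lemma pow_mem (hσ : σ RatFunc.X = RatFunc.X + 1) (ha : a ≠ 0) (α : C) (k : ℕ) (p : C[X]) :
    algebraMap C[X] (RatFunc C) p /
      algebraMap C[X] (RatFunc C) ((X - Polynomial.C α) ^ k) ∈ normalizable σ a := by
  obtain ⟨n, hn⟩ := exists_eq_rep_add α
  rw [hn]
  generalize hβ : rep α = β
  have hrep : rep β = β := by rw [← hβ, rep_rep]
  clear hn hβ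
  induction n using Int.induction_on generalizing p with
  | zero =>
    refine Submodule.mem_sup_left (div_mem_repPoles _ _ fun γ hγ => ?_)
    have : γ = β := by
      have := eq_zero_of_pow_eq_zero (by simpa using hγ : (γ - β) ^ k = 0)
      exact sub_eq_zero.1 this
    rw [this, hrep]
  | succ i ih =>
    rw [← shift_mem_iff σ a hσ ha]
    convert ih (p.comp (X + 1)) using 6
    push_cast; ring
  | pred i ih =>
    have h := (shift_mem_iff σ a hσ ha (β + ((-i : ℤ) : C)) k (p.comp (X - 1))).2 (ih _)
    convert h using 3
    · simp [comp_assoc]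
    · congr 4
      push_cast; ring

/-- Partial fractions: induction on the factorisation of the denominator `q` into powers of
linear polynomials, splitting coprime factors by a Bézout relation. -/
lemma div_mem [IsAlgClosed C] (hσ : σ RatFunc.X = RatFunc.X + 1) (ha : a ≠ 0) (q p : C[X]) :
    algebraMap C[X] (RatFunc C) p / algebraMap C[X] (RatFunc C) q ∈ normalizable σ a := by
  induction q using UniqueFactorizationMonoid.induction_on_coprime generalizing p with
  | h0 => simp
  | @h1 q hq =>
    refine Submodule.mem_sup_left (div_mem_repPoles _ _ fun α hα => ?_)
    have h := hq.map (evalRingHom α)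
    rw [coe_evalRingHom, hα] at h
    exact absurd h not_isUnit_zero
  | @hpr q k hq =>
    have hd : q.degree = 1 := IsAlgClosed.degree_eq_one_of_irreducible C hq.irreducible
    obtain ⟨α, hα⟩ := exists_root_of_degree_eq_one hd
    obtain ⟨u, hu⟩ : Associated (X - Polynomial.C α) q :=
      (prime_X_sub_C α).associated_of_dvd hq (dvd_iff_isRoot.2 hα)
    have key : algebraMap C[X] (RatFunc C) p / algebraMap C[X] (RatFunc C) (q ^ k) =
        algebraMap C[X] (RatFunc C) (p * (↑u⁻¹ : C[X]) ^ k) /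
          algebraMap C[X] (RatFunc C) ((X - Polynomial.C α) ^ k) := by
      have h1 : (X - Polynomial.C α) ^ k ≠ 0 := pow_ne_zero _ (X_sub_C_ne_zero α)
      have h2 : q ^ k ≠ 0 := pow_ne_zero _ hq.ne_zero
      rw [div_eq_div_iff (RatFunc.algebraMap_ne_zero h2) (RatFunc.algebraMap_ne_zero h1),
        ← map_mul, ← map_mul, ← hu]
      congr 1
      have : ((↑u⁻¹ : C[X]) * u) ^ k = 1 := by simp
      rw [mul_pow (X - Polynomial.C α)]
      rw [mul_pow] at this
      linear_combination (-p * (X - Polynomial.C α) ^ k) * this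
    rw [key]
    exact pow_mem σ a hσ ha α k _
  | @hcp q r hqr hq hr =>
    by_cases hq0 : q = 0
    · simp [hq0]
    by_cases hr0 : r = 0
    · simp [hr0]
    obtain ⟨u, v, huv⟩ := isCoprime_of_irreducible_dvd (x := q) (y := r)
      (fun h => hq0 h.1) (fun z hz h1 h2 => hz.not_isUnit (hqr h1 h2))
    have key : algebraMap C[X] (RatFunc C) p / algebraMap C[X] (RatFunc C) (q * r) =
        algebraMap C[X] (RatFunc C) (p * v) / algebraMap C[X] (RatFunc C) q +
          algebraMap C[X] (RatFunc C) (p * u) / algebraMap C[X] (RatFunc C) r := by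
      have h1 := RatFunc.algebraMap_ne_zero hq0
      have h2 := RatFunc.algebraMap_ne_zero hr0
      have h3 := congrArg (algebraMap C[X] (RatFunc C)) huv
      simp only [map_add, map_mul, map_one] at h3 ⊢
      field_simp
      linear_combination -(algebraMap C[X] (RatFunc C) p) * h3
    rw [key]
    exact Submodule.add_mem _ (hq _) (hr _)

end RepPoles


/-- Lemma on normal forms for the shift `σ(x) = x + 1`: every `f ∈ C(x)` can be written
as `f = f* + σ(g) - a·g` with `pdisp(f*) = 0`, i.e. the denominator of `f*` has no two
roots differing by a positive integer. -/
theorem normal_form_shift {C : Type*} [Field C] [IsAlgClosed C] [CharZero C]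
    (σ : RatFunc C ≃ₐ[C] RatFunc C) (hσ : σ RatFunc.X = RatFunc.X + 1)
    (f : RatFunc C) (a : C) (ha : a ≠ 0) :
    ∃ fs g : RatFunc C,
      (¬∃ ℓ : ℕ, 0 < ℓ ∧ ∃ α : C,
        Polynomial.eval α fs.denom = 0 ∧ Polynomial.eval (α + (ℓ : C)) fs.denom = 0) ∧
      f = fs + σ g - RatFunc.C a * g := by
  have hf : f ∈ RepPoles.normalizable σ a := by
    rw [← RatFunc.num_div_denom f]
    exact RepPoles.div_mem σ a hσ ha _ _
  obtain ⟨fs, hfs, _, ⟨g, rfl⟩, h⟩ := Submodule.mem_sup.1 hf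
  refine ⟨fs, g, ?_, ?_⟩
  -- Two representatives that differ by an integer are equal.
  · rintro ⟨ℓ, hℓ, α, h1, h2⟩
    have e1 := hfs α h1
    have e2 := hfs _ h2
    rw [← Int.cast_natCast (R := C), RepPoles.rep_add_int, e1, Int.cast_natCast,
      left_eq_add, Nat.cast_eq_zero] at e2
    omega
  · rw [← h, add_sub_assoc, ← RatFunc.smul_eq_C_mul]
    rfl
end

section
/- Let C be an algebraically closed field of characteristic 0, let q ∈ C be an element that is not a root of unity, and let σ be the C-algebra automorphism of the rational function field C(x) determined by σ(x) = qx. For every f ∈ C(x) and every nonzero a ∈ C there exist f*, g ∈ C(x) such that pdisp_q(f*) = 0 and f = f* + σ(g) − a·g. -/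
/-!
Modulo the `C`-subspace `W = {σ(g) - a·g}`, the function `1/(x-α)^k` is congruent to a nonzero
scalar multiple of `1/(x-q⁻¹α)^k`, because `σ` maps the former to `q^{-k}/(x-q⁻¹α)^k` and `a ≠ 0`.
Hence each pole can be moved freely along its orbit under multiplication by `q`, in particular to a
chosen representative of that orbit. By partial fractions (`submodule_eq_top_of_partialFractions`),
`C(x)` is therefore the sum of `W` and the subspace `polesIn C R` of functions all of whose poles
lie in a set `R` of orbit representatives. If `α ≠ 0` and `q^ℓ·α` both lie in `R`, they are equal,
and `q^ℓ = 1` forces `ℓ = 0`.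
-/

/-- Partial fractions over an algebraically closed field: a subspace of `C(x)` containing all
polynomials and all `1/(x-α)^(k+1)` is everything. -/
theorem submodule_eq_top_of_partialFractions {C : Type*} [Field C] [IsAlgClosed C]
    (T : Submodule C (RatFunc C))
    (hpoly : ∀ p : Polynomial C, algebraMap (Polynomial C) (RatFunc C) p ∈ T)
    (hpole : ∀ (α : C) (k : ℕ), ((RatFunc.X - RatFunc.C α)⁻¹ : RatFunc C) ^ (k + 1) ∈ T) :
    T = ⊤ := by
  classical
  rw [eq_top_iff]
  rintro f -
  have hne (α : C) : algebraMap (Polynomial C) (RatFunc C) (Polynomial.X - Polynomial.C α) ≠ 0 :=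
    RatFunc.algebraMap_ne_zero (Polynomial.X_sub_C_ne_zero α)
  obtain ⟨p, r, hr, h⟩ := Polynomial.mul_prod_pow_inverse_eq_quo_add_sum_rem_mul_pow_inverse
    (K := RatFunc C) (s := f.denom.roots.toFinset) f.num
    (g := fun α => Polynomial.X - Polynomial.C α)
    (fun i _ => Polynomial.monic_X_sub_C i)
    (fun i _ j _ hij => Polynomial.isCoprime_X_sub_C_of_isUnit_sub (sub_ne_zero.2 hij).isUnit)
    (fun α => f.denom.roots.count α)
    (gi := fun α => (algebraMap (Polynomial C) (RatFunc C) (Polynomial.X - Polynomial.C α))⁻¹)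
    (fun i _ => inv_mul_cancel₀ (hne i))
  have hden : f.denom = ∏ α ∈ f.denom.roots.toFinset,
      (Polynomial.X - Polynomial.C α) ^ f.denom.roots.count α := by
    rw [← Finset.prod_multiset_map_count]
    exact (IsAlgClosed.splits f.denom).eq_prod_roots_of_monic (RatFunc.monic_denom f)
  have hf : f = algebraMap (Polynomial C) (RatFunc C) f.num * ∏ α ∈ f.denom.roots.toFinset,
      (algebraMap (Polynomial C) (RatFunc C) (Polynomial.X - Polynomial.C α))⁻¹ ^
        f.denom.roots.count α := by
    conv_lhs => rw [← RatFunc.num_div_denom f, hden]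
    simp only [map_prod, map_pow, inv_pow, Finset.prod_inv_distrib, div_eq_mul_inv]
  rw [hf, h]
  refine T.add_mem (hpoly p) (T.sum_mem fun i hi => T.sum_mem fun j _ => ?_)
  have hdeg := hr i hi j
  rw [Polynomial.degree_X_sub_C] at hdeg
  rw [Polynomial.eq_C_of_degree_le_zero (Nat.WithBot.lt_one_iff_le_zero.1 hdeg)]
  have := T.smul_mem ((r i j).coeff 0) (hpole i j)
  simpa [RatFunc.smul_eq_C_mul] using this

/-- The subspace of rational functions all of whose (finite) poles lie in `R`; poles are the roots
of the reduced denominator. -/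
def polesIn (C : Type*) [Field C] (R : Set C) : Submodule C (RatFunc C) where
  carrier := {f | ∀ α, Polynomial.eval α f.denom = 0 → α ∈ R}
  zero_mem' := by simp
  add_mem' := by
    intro f g hf hg α hα
    have := Polynomial.eval_eq_zero_of_dvd_of_eval_eq_zero (RatFunc.denom_add_dvd f g) hα
    rw [Polynomial.eval_mul, mul_eq_zero] at this
    exact this.elim (hf α) (hg α)
  smul_mem' := by
    intro c f hf α hα
    rw [RatFunc.smul_eq_C_mul] at hα
    have := Polynomial.eval_eq_zero_of_dvd_of_eval_eq_zero (RatFunc.denom_mul_dvd _ f) hα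
    rw [RatFunc.denom_C, one_mul] at this
    exact hf α this

/-- The substitution `σ` moves the pole `q·β` to `β`, at the cost of a nonzero scalar. -/
theorem map_inv_X_sub_C_pow {C : Type*} [Field C] (q : C)
    (σ : RatFunc C ≃ₐ[C] RatFunc C) (hσ : σ RatFunc.X = RatFunc.C q * RatFunc.X) (β : C) (n : ℕ) :
    σ ((RatFunc.X - RatFunc.C (q * β))⁻¹ ^ n) =
      (q⁻¹ ^ n) • (RatFunc.X - RatFunc.C β)⁻¹ ^ n := by
  have hC : σ (RatFunc.C (q * β)) = RatFunc.C (q * β) := σ.commutes _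
  rw [map_pow, map_inv₀, map_sub, hσ, hC, map_mul, ← mul_sub, mul_inv, mul_pow,
    RatFunc.smul_eq_C_mul, map_pow, map_inv₀]

/-- Modulo `σ(g) - a·g`, a pole may be moved one step along its `q`-orbit in either direction. -/
theorem inv_X_sub_C_pow_mem_iff {C : Type*} [Field C] (q : C) (hq0 : q ≠ 0)
    (σ : RatFunc C ≃ₐ[C] RatFunc C) (hσ : σ RatFunc.X = RatFunc.C q * RatFunc.X)
    (a : C) (ha : a ≠ 0) (T : Submodule C (RatFunc C)) (hT : ∀ g, σ g - a • g ∈ T)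
    (β : C) (n : ℕ) :
    (RatFunc.X - RatFunc.C (q * β))⁻¹ ^ n ∈ T ↔ (RatFunc.X - RatFunc.C β)⁻¹ ^ n ∈ T := by
  have h := hT ((RatFunc.X - RatFunc.C (q * β))⁻¹ ^ n)
  rw [map_inv_X_sub_C_pow q σ hσ] at h
  rw [← T.smul_mem_iff ha,
    ← T.smul_mem_iff (pow_ne_zero n (inv_ne_zero hq0)) (x := (RatFunc.X - RatFunc.C β)⁻¹ ^ n)]
  exact ⟨fun h' => by simpa only [sub_add_cancel] using T.add_mem h h',
    fun h' => by simpa only [sub_sub_cancel] using T.sub_mem h' h⟩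

/-- Lemma on normal forms for `σ(x) = q·x`, `q` not a root of unity: every `f ∈ C(x)`
can be written as `f = f* + σ(g) - a·g` with `pdisp_q(f*) = 0`, i.e. the denominator of
`f*` has no two nonzero roots of the form `α, q^ℓ·α` with `ℓ > 0`. -/
theorem normal_form_q {C : Type*} [Field C] [IsAlgClosed C] [CharZero C]
    (q : C) (hq : ∀ n : ℕ, 0 < n → q ^ n ≠ 1)
    (σ : RatFunc C ≃ₐ[C] RatFunc C) (hσ : σ RatFunc.X = RatFunc.C q * RatFunc.X)
    (f : RatFunc C) (a : C) (ha : a ≠ 0) :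
    ∃ fs g : RatFunc C,
      (¬∃ ℓ : ℕ, 0 < ℓ ∧ ∃ α : C, α ≠ 0 ∧
        Polynomial.eval α fs.denom = 0 ∧
        Polynomial.eval (q ^ ℓ * α) fs.denom = 0) ∧
      f = fs + σ g - RatFunc.C a * g := by
  have hq0 : q ≠ 0 := by
    rintro rfl
    rw [map_zero, zero_mul, map_eq_zero] at hσ
    exact RatFunc.X_ne_zero hσ
  let u : Cˣ := Units.mk0 q hq0
  let G := Subgroup.zpowers u
  -- The chosen representative of the orbit of `α` under multiplication by powers of `q`.
  let rep : C → C := fun α => (Quotient.mk (MulAction.orbitRel G C) α).out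
  have hrep (α : C) : ∃ v ∈ G, (v : C) * α = rep α := by
    obtain ⟨⟨v, hv⟩, h⟩ := MulAction.orbitRel_apply.1
      (Quotient.exact (Quotient.out_eq (Quotient.mk (MulAction.orbitRel G C) α)))
    exact ⟨v, hv, h⟩
  have hrep_eq {α β : C} {v : Cˣ} (hv : v ∈ G) (h : (v : C) * α = β) : rep β = rep α :=
    congrArg Quotient.out (Quotient.sound (MulAction.orbitRel_apply.2 ⟨⟨v, hv⟩, h⟩))
  have hrep_rep (α : C) : rep (rep α) = rep α := by
    obtain ⟨v, hv, h⟩ := hrep α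
    exact hrep_eq hv h
  let W : Submodule C (RatFunc C) := LinearMap.range (σ.toLinearMap - a • LinearMap.id)
  let T := polesIn C (Set.range rep) ⊔ W
  have hT (g : RatFunc C) : σ g - a • g ∈ T := Submodule.mem_sup_right ⟨g, rfl⟩
  have hmove (n : ℕ) {v : Cˣ} (hv : v ∈ G) : ∀ β : C,
      (RatFunc.X - RatFunc.C (v * β))⁻¹ ^ n ∈ T ↔ (RatFunc.X - RatFunc.C β)⁻¹ ^ n ∈ T := by
    have hstep := inv_X_sub_C_pow_mem_iff q hq0 σ hσ a ha T hT
    rw [show G = Subgroup.closure {u} from Subgroup.zpowers_eq_closure u] at hv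
    induction hv using Subgroup.closure_induction with
    | mem w hw =>
      obtain rfl : w = u := hw
      exact fun β => hstep β n
    | one => simp
    | mul v w _ _ h₁ h₂ => intro β; rw [Units.val_mul, mul_assoc, h₁, h₂]
    | inv v _ h => intro β; rw [← h, Units.mul_inv_cancel_left]
  have htop : T = ⊤ := by
    refine submodule_eq_top_of_partialFractions T (fun p => ?_) fun α k => ?_
    · refine Submodule.mem_sup_left fun α hα => ?_
      simp at hα
    · obtain ⟨v, hv, h⟩ := hrep α
      rw [← hmove _ hv, h]
      refine Submodule.mem_sup_left fun β hβ => ⟨α, ?_⟩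
      have hX : (RatFunc.X - RatFunc.C (rep α))⁻¹ ^ (k + 1) =
          algebraMap (Polynomial C) (RatFunc C) 1 / algebraMap (Polynomial C) (RatFunc C)
            ((Polynomial.X - Polynomial.C (rep α)) ^ (k + 1)) := by
        simp
      rw [hX] at hβ
      have := Polynomial.eval_eq_zero_of_dvd_of_eval_eq_zero (RatFunc.denom_div_dvd _ _) hβ
      rw [Polynomial.eval_pow, Polynomial.eval_sub, Polynomial.eval_X, Polynomial.eval_C] at this
      exact (sub_eq_zero.1 (pow_eq_zero_iff k.succ_ne_zero |>.1 this)).symm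
  obtain ⟨fs, hfs, _, ⟨g, rfl⟩, h⟩ := Submodule.mem_sup.1 (htop ▸ Submodule.mem_top : f ∈ T)
  refine ⟨fs, g, ?_, ?_⟩
  · rintro ⟨ℓ, hℓ, α, hα, h₁, h₂⟩
    obtain ⟨β, rfl⟩ := hfs _ h₁
    obtain ⟨γ, hγ⟩ := hfs _ h₂
    have : rep (q ^ ℓ * rep β) = rep (rep β) :=
      hrep_eq (v := u ^ ℓ) (Subgroup.npow_mem_zpowers u ℓ) (by simp [u])
    rw [← hγ, hrep_rep, hrep_rep, hγ] at this
    exact hq ℓ hℓ ((mul_eq_right₀ hα).1 this)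
  · rw [← h, add_sub_assoc, ← RatFunc.smul_eq_C_mul]
    rfl
end

section
/- Let C be an algebraically closed field of characteristic 0 and let σ be the C-algebra automorphism of C(x) with σ(x) = x + 1. For every nonzero f ∈ C(x) there exist nonzero f̃, g̃ ∈ C(x) such that f = f̃·σ(g̃)/g̃ and f̃ is standard. -/
/-!
The additive group `ℤ` acts on `C` by translation; fix one representative in each coset of `ℤ`.
Modulo the multiplicative group of the elements `σ(g)/g`, a linear factor `x - (a + 1)` equals
`x - a`, because `σ(x - (a + 1)) = x - a`. Hence every linear factor can be moved to the chosen
representative of its coset (`shiftNormal_X_sub_C`). As `C` is algebraically closed, the nonzero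
rational functions are generated by constants and linear factors, so `f` is, modulo some `σ(g)/g`,
a quotient `p/q` all of whose zeros and poles are representatives. Two distinct representatives
never differ by an integer, and two equal ones differ by `0`, so `p/q` is standard.
-/

open Polynomial in
/-- `f = (p/q)·σ(g)/g` with nonzero polynomials `p`, `q` all of whose roots lie in `R`. -/
def ShiftNormal {C : Type*} [Field C] (σ : RatFunc C ≃ₐ[C] RatFunc C) (R : Set C)
    (f : RatFunc C) : Prop :=
  ∃ (p q : C[X]) (g : RatFunc C), p ≠ 0 ∧ q ≠ 0 ∧ g ≠ 0 ∧
    (∀ a, p.eval a = 0 → a ∈ R) ∧ (∀ a, q.eval a = 0 → a ∈ R) ∧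
    f = algebraMap C[X] (RatFunc C) p / algebraMap C[X] (RatFunc C) q * σ g / g

section
open Polynomial

variable {C : Type*} [Field C] {σ : RatFunc C ≃ₐ[C] RatFunc C} {R : Set C}

theorem ShiftNormal.mul {f₁ f₂ : RatFunc C} (h₁ : ShiftNormal σ R f₁)
    (h₂ : ShiftNormal σ R f₂) : ShiftNormal σ R (f₁ * f₂) := by
  obtain ⟨p, q, g, hp, hq, hg, hpR, hqR, rfl⟩ := h₁
  obtain ⟨p', q', g', hp', hq', hg', hpR', hqR', rfl⟩ := h₂
  refine ⟨p * p', q * q', g * g', mul_ne_zero hp hp', mul_ne_zero hq hq', mul_ne_zero hg hg',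
    fun a ha => ?_, fun a ha => ?_, ?_⟩
  · rw [eval_mul, mul_eq_zero] at ha
    exact ha.elim (hpR a) (hpR' a)
  · rw [eval_mul, mul_eq_zero] at ha
    exact ha.elim (hqR a) (hqR' a)
  · simp only [map_mul]
    simp only [div_eq_mul_inv, mul_inv]
    ring

theorem ShiftNormal.inv {f : RatFunc C} (h : ShiftNormal σ R f) : ShiftNormal σ R f⁻¹ := by
  obtain ⟨p, q, g, hp, hq, hg, hpR, hqR, rfl⟩ := h
  refine ⟨q, p, g⁻¹, hq, hp, inv_ne_zero hg, hqR, hpR, ?_⟩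
  simp only [map_inv₀, div_eq_mul_inv, mul_inv, inv_inv]
  ring

theorem shiftNormal_coboundary {g : RatFunc C} (hg : g ≠ 0) : ShiftNormal σ R (σ g / g) :=
  ⟨1, 1, g, one_ne_zero, one_ne_zero, hg, by simp, by simp, by simp⟩

theorem shiftNormal_of_roots {p : C[X]} (hp : p ≠ 0) (hR : ∀ a, p.eval a = 0 → a ∈ R) :
    ShiftNormal σ R (algebraMap C[X] (RatFunc C) p) :=
  ⟨p, 1, 1, hp, one_ne_zero, one_ne_zero, hR, by simp, by simp⟩

/-- `x - a` and `x - (a + 1)` differ by the factor `σ(g)/g` with `g = x - (a + 1)`. -/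
theorem shiftNormal_succ_iff (hσ : σ RatFunc.X = RatFunc.X + 1) (a : C) :
    ShiftNormal σ R (algebraMap C[X] (RatFunc C) (X - Polynomial.C (a + 1))) ↔
      ShiftNormal σ R (algebraMap C[X] (RatFunc C) (X - Polynomial.C a)) := by
  have h0 (b : C) : algebraMap C[X] (RatFunc C) (X - Polynomial.C b) ≠ 0 := by
    exact RatFunc.algebraMap_ne_zero (X_sub_C_ne_zero b)
  have hs : σ (algebraMap C[X] (RatFunc C) (X - Polynomial.C (a + 1))) =
      algebraMap C[X] (RatFunc C) (X - Polynomial.C a) := by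
    have hc : σ (RatFunc.C (a + 1)) = RatFunc.C (a + 1) := by
      rw [← RatFunc.algebraMap_eq_C]; exact σ.commutes _
    simp only [map_sub, RatFunc.algebraMap_X, RatFunc.algebraMap_C, hσ, hc]
    simp
  have hg := shiftNormal_coboundary (σ := σ) (R := R) (h0 (a + 1))
  rw [hs] at hg
  constructor
  · intro h
    have := h.mul hg
    rwa [mul_div_cancel₀ _ (h0 _)] at this
  · intro h
    have := h.mul hg.inv
    rwa [inv_div, mul_div_cancel₀ _ (h0 _)] at this

theorem shiftNormal_X_sub_C (hσ : σ RatFunc.X = RatFunc.X + 1) {r : C} (hr : r ∈ R) (n : ℤ) :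
    ShiftNormal σ R (algebraMap C[X] (RatFunc C) (X - Polynomial.C (r + n))) := by
  induction n using Int.induction_on with
  | zero =>
    refine shiftNormal_of_roots (X_sub_C_ne_zero _) fun a ha => ?_
    have : a = r := by simpa [sub_eq_zero] using ha
    rwa [this]
  | succ i ih =>
    rw [← shiftNormal_succ_iff hσ] at ih
    push_cast at ih ⊢
    rwa [← add_assoc]
  | pred i ih =>
    rw [← shiftNormal_succ_iff hσ]
    convert ih using 4
    push_cast
    ring

theorem shiftNormal_polynomial [IsAlgClosed C] (hσ : σ RatFunc.X = RatFunc.X + 1)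
    (hR : ∀ a : C, ∃ r ∈ R, ∃ n : ℤ, a = r + n) {p : C[X]} (hp : p ≠ 0) :
    ShiftNormal σ R (algebraMap C[X] (RatFunc C) p) := by
  rw [(IsAlgClosed.splits p).eq_prod_roots, map_mul]
  refine ShiftNormal.mul (shiftNormal_of_roots (by simpa using hp) (by simp [hp])) ?_
  rw [map_multiset_prod]
  refine Multiset.prod_induction (ShiftNormal σ R) _ (fun _ _ => ShiftNormal.mul) ?_ ?_
  · simpa using shiftNormal_of_roots (σ := σ) (R := R) (p := 1) one_ne_zero (by simp)
  · simp only [Multiset.map_map, Multiset.mem_map]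
    rintro _ ⟨a, -, rfl⟩
    obtain ⟨r, hr, n, rfl⟩ := hR a
    exact shiftNormal_X_sub_C hσ hr n

/-- A transversal of the cosets of `ℤ` in `C`. -/
theorem exists_int_transversal (C : Type*) [Field C] [CharZero C] :
    ∃ R : Set C, (∀ a : C, ∃ r ∈ R, ∃ n : ℤ, a = r + n) ∧
      ∀ (a : C) (l : ℕ), a ∈ R → a + l ∈ R → l = 0 := by
  let Z := AddSubgroup.zmultiples (1 : C)
  refine ⟨Set.range (Quotient.out : C ⧸ Z → C), fun a => ?_, ?_⟩
  · have h : ((a : C ⧸ Z).out : C ⧸ Z) = a := QuotientAddGroup.out_eq' _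
    rw [QuotientAddGroup.eq, AddSubgroup.mem_zmultiples_iff] at h
    obtain ⟨n, hn⟩ := h
    refine ⟨_, ⟨(a : C ⧸ Z), rfl⟩, n, ?_⟩
    rw [zsmul_one] at hn
    rw [hn]
    ring
  · rintro a l ⟨u, rfl⟩ ⟨v, hv⟩
    have huv : u = v := by
      rw [← QuotientAddGroup.out_eq' u, ← QuotientAddGroup.out_eq' v, QuotientAddGroup.eq,
        AddSubgroup.mem_zmultiples_iff]
      exact ⟨l, by rw [hv]; simp⟩
    subst huv
    simpa using hv

end

/-- Multiplicative normal form for the shift `σ(x) = x + 1`: every nonzero `f ∈ C(x)`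
can be written as `f = f̃·σ(g̃)/g̃` with `f̃` standard, i.e. no element of the set of
zeros and poles of `f̃` (roots of `num·denom`) is obtained from another by adding a
positive integer. -/
theorem mult_normal_form_shift {C : Type*} [Field C] [IsAlgClosed C] [CharZero C]
    (σ : RatFunc C ≃ₐ[C] RatFunc C) (hσ : σ RatFunc.X = RatFunc.X + 1)
    (f : RatFunc C) (hf : f ≠ 0) :
    ∃ ft gt : RatFunc C, ft ≠ 0 ∧ gt ≠ 0 ∧ f = ft * σ gt / gt ∧
      ¬∃ ℓ : ℕ, 0 < ℓ ∧ ∃ α : C,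
        Polynomial.eval α (ft.num * ft.denom) = 0 ∧
        Polynomial.eval (α + (ℓ : C)) (ft.num * ft.denom) = 0 := by
  obtain ⟨R, hR, hR'⟩ := exists_int_transversal C
  have hN : ShiftNormal σ R f := by
    rw [← RatFunc.num_div_denom f, div_eq_mul_inv]
    exact (shiftNormal_polynomial hσ hR (RatFunc.num_ne_zero hf)).mul
      (shiftNormal_polynomial hσ hR f.denom_ne_zero).inv
  obtain ⟨p, q, g, hp, hq, hg, hpR, hqR, hfe⟩ := hN
  refine ⟨_, g, ?_, hg, hfe, ?_⟩
  · exact div_ne_zero (by simpa using hp) (by simpa using hq)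
  · -- Reducing `p / q` to lowest terms creates no new zeros or poles.
    have key : ∀ a : C, Polynomial.eval a
        ((algebraMap _ (RatFunc C) p / algebraMap _ (RatFunc C) q).num *
          (algebraMap _ (RatFunc C) p / algebraMap _ (RatFunc C) q).denom) = 0 → a ∈ R := by
      intro a ha
      rw [Polynomial.eval_mul, mul_eq_zero] at ha
      rcases ha with ha | ha
      · exact hpR a (Polynomial.eval_eq_zero_of_dvd_of_eval_eq_zero
          (RatFunc.num_div_dvd p hq) ha)
      · exact hqR a (Polynomial.eval_eq_zero_of_dvd_of_eval_eq_zero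
          (RatFunc.denom_div_dvd p q) ha)
    rintro ⟨l, hl, a, h1, h2⟩
    exact hl.ne' (hR' a l (key _ h1) (key _ h2))
end

section
/- Let C be an algebraically closed field of characteristic 0, let q ∈ C be an element that is not a root of unity, and let σ be the C-algebra automorphism of C(x) with σ(x) = qx. For every nonzero f ∈ C(x) there exist nonzero f̃, g̃ ∈ C(x) such that f = f̃·σ(g̃)/g̃ and f̃ is standard. -/
/-!
Elements of `C` split into orbits under multiplication by powers of `q`. Fix a set `R`
containing one representative of each orbit. Since `σ(X - qβ) = q (X - β)`, the factors `X - β` and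
`X - qβ` agree up to a constant and a factor `σ(g)/g`, so every linear factor can be replaced by one
whose root lies in `R` (`SupportedModulo.X_sub_C_zpow_mul`). The functions for which this succeeds
are closed under products and inverses and contain the constants, so they are all of `C(X)ˣ`,
as `C` is algebraically closed. A function with zeros and poles in `R` is standard: two of
its zeros or poles in the same orbit coincide, and `q ^ ℓ α = α` with `α ≠ 0`, `ℓ > 0` would make
`q` a root of unity.
-/

open Polynomial in
/-- `f` is, up to a factor `σ(g)/g`, a rational function with zeros and poles in `R`. The quotient
`p/r` need not be in lowest terms: this makes closure under products immediate. -/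
def SupportedModulo {C : Type*} [Field C] (σ : RatFunc C ≃ₐ[C] RatFunc C) (R : Set C)
    (f : RatFunc C) : Prop :=
  ∃ (p r : C[X]) (g : RatFunc C), p ≠ 0 ∧ r ≠ 0 ∧ g ≠ 0 ∧
    (∀ a, p.eval a = 0 → a ∈ R) ∧ (∀ a, r.eval a = 0 → a ∈ R) ∧
    f = (algebraMap C[X] (RatFunc C) p / algebraMap C[X] (RatFunc C) r) * σ g / g

namespace SupportedModulo

open Polynomial

variable {C : Type*} [Field C] {σ : RatFunc C ≃ₐ[C] RatFunc C} {R : Set C}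

lemma mul {f₁ f₂ : RatFunc C} (h₁ : SupportedModulo σ R f₁) (h₂ : SupportedModulo σ R f₂) :
    SupportedModulo σ R (f₁ * f₂) := by
  obtain ⟨p, r, g, hp, hr, hg, hpR, hrR, rfl⟩ := h₁
  obtain ⟨p', r', g', hp', hr', hg', hpR', hrR', rfl⟩ := h₂
  refine ⟨p * p', r * r', g * g', mul_ne_zero hp hp', mul_ne_zero hr hr', mul_ne_zero hg hg',
    ?_, ?_, ?_⟩
  · intro a ha
    rw [eval_mul, mul_eq_zero] at ha
    exact ha.elim (hpR a) (hpR' a)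
  · intro a ha
    rw [eval_mul, mul_eq_zero] at ha
    exact ha.elim (hrR a) (hrR' a)
  · simp only [map_mul, div_eq_mul_inv, mul_inv]
    ring

lemma inv {f : RatFunc C} (h : SupportedModulo σ R f) : SupportedModulo σ R f⁻¹ := by
  obtain ⟨p, r, g, hp, hr, hg, hpR, hrR, rfl⟩ := h
  refine ⟨r, p, g⁻¹, hr, hp, inv_ne_zero hg, hrR, hpR, ?_⟩
  simp only [map_inv₀, div_eq_mul_inv, mul_inv, inv_inv]
  ring

lemma of_poly {p : C[X]} (hp : p ≠ 0) (h : ∀ a, p.eval a = 0 → a ∈ R) :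
    SupportedModulo σ R (algebraMap C[X] (RatFunc C) p) :=
  ⟨p, 1, 1, hp, one_ne_zero, one_ne_zero, h, by simp, by simp⟩

lemma const {c : C} (hc : c ≠ 0) : SupportedModulo σ R (RatFunc.C c) := by
  rw [← RatFunc.algebraMap_C]
  exact of_poly (C_ne_zero.mpr hc) (by simp [hc])

lemma map_div_self {g : RatFunc C} (hg : g ≠ 0) : SupportedModulo σ R (σ g / g) :=
  ⟨1, 1, g, one_ne_zero, one_ne_zero, hg, by simp, by simp, by simp⟩

lemma X_sub_C_ne_zero (β : C) : (RatFunc.X - RatFunc.C β : RatFunc C) ≠ 0 := by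
  rw [← RatFunc.algebraMap_X, ← RatFunc.algebraMap_C, ← map_sub]
  exact RatFunc.algebraMap_ne_zero (Polynomial.X_sub_C_ne_zero β)

/-- Since `σ(X - qβ) = q (X - β)`, roots can be moved within a `q`-orbit. -/
lemma X_sub_C_iff {q : C} (hq0 : q ≠ 0) (hσ : σ RatFunc.X = RatFunc.C q * RatFunc.X) (β : C) :
    SupportedModulo σ R (RatFunc.X - RatFunc.C β) ↔
      SupportedModulo σ R (RatFunc.X - RatFunc.C (q * β)) := by
  have hC : ∀ c : C, σ (RatFunc.C c) = RatFunc.C c := fun c => by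
    simpa [RatFunc.algebraMap_eq_C] using σ.commutes c
  have hqC : (RatFunc.C q : RatFunc C) ≠ 0 := by simpa using hq0
  have hg := X_sub_C_ne_zero (q * β)
  have key : σ (RatFunc.X - RatFunc.C (q * β)) =
      RatFunc.C q * (RatFunc.X - RatFunc.C β) := by
    rw [map_sub, hσ, hC, map_mul]; ring
  have hd := map_div_self (σ := σ) (R := R) hg
  have hc := const (σ := σ) (R := R) hq0
  constructor
  · intro h
    convert (hc.mul h).mul hd.inv using 1
    rw [key]
    have := X_sub_C_ne_zero β
    field_simp
  · intro h
    convert (hc.inv.mul h).mul hd using 1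
    rw [key]
    field_simp

lemma X_sub_C_zpow_mul {q : C} (hq0 : q ≠ 0) (hσ : σ RatFunc.X = RatFunc.C q * RatFunc.X)
    {ρ : C} (hρ : ρ ∈ R) (m : ℤ) :
    SupportedModulo σ R (RatFunc.X - RatFunc.C (q ^ m * ρ)) := by
  induction m using Int.induction_on with
  | zero =>
    rw [← RatFunc.algebraMap_X, ← RatFunc.algebraMap_C, ← map_sub]
    refine of_poly (Polynomial.X_sub_C_ne_zero _) fun a ha => ?_
    have : a = ρ := by simpa [sub_eq_zero] using ha
    exact this ▸ hρ
  | succ n ih =>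
    rw [X_sub_C_iff hq0 hσ] at ih
    convert ih using 3
    rw [zpow_add_one₀ hq0]; ring
  | pred n ih =>
    rw [X_sub_C_iff hq0 hσ]
    convert ih using 3
    rw [zpow_sub_one₀ hq0]; field_simp

lemma of_forall_X_sub_C [IsAlgClosed C]
    (h : ∀ α, SupportedModulo σ R (RatFunc.X - RatFunc.C α)) {f : RatFunc C} (hf : f ≠ 0) :
    SupportedModulo σ R f := by
  have hpoly : ∀ p : C[X], p ≠ 0 → SupportedModulo σ R (algebraMap C[X] (RatFunc C) p) := by
    intro p hp
    rw [(IsAlgClosed.splits p).eq_prod_roots, map_mul, RatFunc.algebraMap_C]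
    refine (const (leadingCoeff_ne_zero.mpr hp)).mul ?_
    induction p.roots using Multiset.induction_on with
    | empty => simpa using const (σ := σ) (R := R) (one_ne_zero : (1 : C) ≠ 0)
    | cons a s ih =>
      rw [Multiset.map_cons, Multiset.prod_cons, map_mul, map_sub, RatFunc.algebraMap_X,
        RatFunc.algebraMap_C]
      exact (h a).mul ih
  rw [← RatFunc.num_div_denom f, div_eq_mul_inv]
  exact (hpoly _ (RatFunc.num_ne_zero hf)).mul (hpoly _ f.denom_ne_zero).inv

end SupportedModulo

/-- The relation of lying in the same orbit under multiplication by powers of `q`. -/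
def qOrbitSetoid {C : Type*} [Field C] {q : C} (hq0 : q ≠ 0) : Setoid C where
  r a b := ∃ m : ℤ, b = q ^ m * a
  iseqv :=
    { refl := fun a => ⟨0, by simp⟩
      symm := by
        rintro a b ⟨m, rfl⟩
        exact ⟨-m, by rw [← mul_assoc, ← zpow_add₀ hq0]; simp⟩
      trans := by
        rintro a b c ⟨m, rfl⟩ ⟨n, rfl⟩
        exact ⟨n + m, by rw [zpow_add₀ hq0, mul_assoc]⟩ }

/-- Multiplicative normal form for `σ(x) = q·x`, `q` not a root of unity: every nonzero
`f ∈ C(x)` can be written as `f = f̃·σ(g̃)/g̃` with `f̃` standard, i.e. no nonzero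
element of the set of zeros and poles of `f̃` (roots of `num·denom`) is obtained from
another by multiplying by `q^ℓ`, `ℓ > 0`. -/
theorem mult_normal_form_q {C : Type*} [Field C] [IsAlgClosed C] [CharZero C]
    (q : C) (hq : ∀ n : ℕ, 0 < n → q ^ n ≠ 1)
    (σ : RatFunc C ≃ₐ[C] RatFunc C) (hσ : σ RatFunc.X = RatFunc.C q * RatFunc.X)
    (f : RatFunc C) (hf : f ≠ 0) :
    ∃ ft gt : RatFunc C, ft ≠ 0 ∧ gt ≠ 0 ∧ f = ft * σ gt / gt ∧
      ¬∃ ℓ : ℕ, 0 < ℓ ∧ ∃ α : C, α ≠ 0 ∧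
        Polynomial.eval α (ft.num * ft.denom) = 0 ∧
        Polynomial.eval (q ^ ℓ * α) (ft.num * ft.denom) = 0 := by
  have hq0 : q ≠ 0 := by
    rintro rfl
    rw [map_zero, zero_mul, map_eq_zero_iff σ σ.injective] at hσ
    exact RatFunc.X_ne_zero hσ
  let S := qOrbitSetoid hq0
  let R : Set C := Set.range (Quotient.out : Quotient S → C)
  have hfR : SupportedModulo σ R f := by
    refine SupportedModulo.of_forall_X_sub_C (fun α => ?_) hf
    obtain ⟨m, hm⟩ : ∃ m : ℤ, α = q ^ m * (Quotient.mk S α).out := Quotient.mk_out (s := S) α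
    rw [hm]
    exact SupportedModulo.X_sub_C_zpow_mul hq0 hσ (Set.mem_range_self (Quotient.mk S α)) m
  obtain ⟨p, r, g, hp, hr, hg, hpR, hrR, hfe⟩ := hfR
  refine ⟨_, g, div_ne_zero (RatFunc.algebraMap_ne_zero hp) (RatFunc.algebraMap_ne_zero hr), hg,
    hfe, ?_⟩
  rintro ⟨ℓ, hℓ, α, hα, h₁, h₂⟩
  -- Passing to lowest terms only removes zeros and poles.
  have hmem : ∀ a, Polynomial.eval a
      ((algebraMap (Polynomial C) (RatFunc C) p / algebraMap (Polynomial C) (RatFunc C) r).num *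
        (algebraMap (Polynomial C) (RatFunc C) p /
          algebraMap (Polynomial C) (RatFunc C) r).denom) = 0 → a ∈ R := by
    intro a ha
    rw [Polynomial.eval_mul, mul_eq_zero] at ha
    rcases ha with ha | ha
    · exact hpR a (Polynomial.eval_eq_zero_of_dvd_of_eval_eq_zero (RatFunc.num_div_dvd p hr) ha)
    · exact hrR a (Polynomial.eval_eq_zero_of_dvd_of_eval_eq_zero (RatFunc.denom_div_dvd p r) ha)
  obtain ⟨u, hu⟩ := hmem _ h₁
  obtain ⟨v, hv⟩ := hmem _ h₂
  have huv : u = v := by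
    rw [← Quotient.out_eq u, ← Quotient.out_eq v]
    refine Quotient.sound (s := S) ⟨(ℓ : ℤ), ?_⟩
    rw [hu, hv, zpow_natCast]
  rw [huv, hv] at hu
  exact hq ℓ hℓ (mul_right_cancel₀ hα (by rw [hu, one_mul]))
end

section
/- Let C be an algebraically closed field of characteristic 0, let σ be the C-algebra automorphism of C(x) with σ(x) = x + 1, and let a ∈ C be nonzero. If f ∈ C(x) has a pole (i.e. f is not a polynomial), then pdisp(σ(f) − a·f) > 0. -/
/-!
Write `f` in lowest terms and let `S` be the finite, nonempty set of its poles. Starting from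
`β ∈ S`, climb by steps of `1` to the last consecutive pole `β + n` and descend to the last
consecutive pole `β - m` (`exists_last_root`). The poles of `σ f` are the points `α` with
`α + 1 ∈ S` (`pole_of_shift_pole`, applied to `σ` and `σ⁻¹`). Hence `β + n` is a pole of `a f` but
not of `σ f`, and `β - m - 1` is a pole of `σ f` but not of `a f`. No cancellation is possible at
either point, so both are poles of `σ f - a f`, and they differ by `n + m + 1 > 0`.
-/

open Polynomial in
/-- A nonzero polynomial cannot vanish along a whole arithmetic progression, so a progression with
nonzero step that starts at a root has a last consecutive root. -/
theorem exists_last_root {C : Type*} [Field C] [CharZero C] {p : C[X]} (hp : p ≠ 0)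
    {β : C} (hβ : p.eval β = 0) {s : C} (hs : s ≠ 0) :
    ∃ n : ℕ, p.eval (β + s * n) = 0 ∧ p.eval (β + s * (n + 1)) ≠ 0 := by
  by_contra! h
  have hall : ∀ n : ℕ, p.eval (β + s * n) = 0 := by
    intro n
    induction n with
    | zero => simpa using hβ
    | succ k ih => simpa using h k ih
  refine hp (eq_zero_of_infinite_isRoot p
    ((Set.infinite_range_of_injective (f := fun n : ℕ => β + s * n) ?_).mono ?_))
  · intro m n hmn
    simpa [hs] using hmn
  · rintro _ ⟨n, rfl⟩
    exact hall n

open Polynomial in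
theorem root_of_dvd_mul {C : Type*} [Field C] {p q r : C[X]} (h : p ∣ q * r) {α : C}
    (hp : p.eval α = 0) (hq : q.eval α ≠ 0) : r.eval α = 0 := by
  have := eval_eq_zero_of_dvd_of_eval_eq_zero h hp
  rw [eval_mul] at this
  exact (mul_eq_zero.mp this).resolve_left hq

/-- A translation `x ↦ x + c` moves poles by `-c`. -/
theorem pole_of_shift_pole {C : Type*} [Field C] (τ : RatFunc C ≃ₐ[C] RatFunc C) {c : C}
    (hτ : τ RatFunc.X = RatFunc.X + RatFunc.C c) (f : RatFunc C) {α : C}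
    (h : (τ f).denom.eval α = 0) : f.denom.eval (α + c) = 0 := by
  have hpoly : ∀ p : Polynomial C, τ (algebraMap _ (RatFunc C) p) =
      algebraMap _ (RatFunc C) (p.comp (Polynomial.X + Polynomial.C c)) := by
    intro p
    induction p using Polynomial.induction_on' with
    | add p q hp hq => simp [hp, hq]
    | monomial n b =>
      have hb : τ (RatFunc.C b) = RatFunc.C b := by
        rw [← RatFunc.algebraMap_eq_C]; exact τ.commutes b
      simp [← Polynomial.C_mul_X_pow_eq_monomial, hτ, hb]
  have hdvd : (τ f).denom ∣ f.denom.comp (Polynomial.X + Polynomial.C c) := by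
    have hne : f.denom.comp (Polynomial.X + Polynomial.C c) ≠ 0 := by
      intro h0
      have := hpoly f.denom
      rw [h0, map_zero, EmbeddingLike.map_eq_zero_iff] at this
      exact RatFunc.algebraMap_ne_zero f.denom_ne_zero this
    rw [RatFunc.denom_dvd hne]
    refine ⟨f.num.comp (Polynomial.X + Polynomial.C c), ?_⟩
    rw [← hpoly, ← hpoly, ← map_div₀, RatFunc.num_div_denom]
  simpa using Polynomial.eval_eq_zero_of_dvd_of_eval_eq_zero hdvd h

/-- Poles do not cancel: a pole of `u` that is not a pole of `v` is a pole of `u + v`, because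
`u = -v + (u + v)` bounds the denominator of `u`. -/
theorem pole_add {C : Type*} [Field C] {u v : RatFunc C} {α : C}
    (hu : u.denom.eval α = 0) (hv : v.denom.eval α ≠ 0) : (u + v).denom.eval α = 0 := by
  have hd : u.denom ∣ (-v).denom * (u + v).denom := by
    simpa using RatFunc.denom_add_dvd (-v) (u + v)
  have hn : (-v).denom ∣ v.denom := by
    have := RatFunc.denom_mul_dvd (RatFunc.C (-1)) v
    rwa [RatFunc.denom_C, one_mul, map_neg, map_one, neg_one_mul] at this
  exact root_of_dvd_mul hd hu fun h =>
    hv (Polynomial.eval_eq_zero_of_dvd_of_eval_eq_zero hn h)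

theorem exists_pole {C : Type*} [Field C] [IsAlgClosed C] (f : RatFunc C)
    (hf : ¬∃ p : Polynomial C, algebraMap (Polynomial C) (RatFunc C) p = f) :
    ∃ β, f.denom.eval β = 0 := by
  refine IsAlgClosed.exists_root f.denom fun hdeg => hf ⟨f.num, ?_⟩
  have h1 : f.denom = 1 :=
    f.monic_denom.natDegree_eq_zero.mp (Polynomial.natDegree_eq_of_degree_eq_some hdeg)
  simpa [h1] using f.num_div_denom

/-- If `f ∈ C(x)` has a pole (it is not a polynomial) and `a ∈ C` is nonzero, then the
polar dispersion of `σ(f) - a·f` is positive for the shift `σ(x) = x + 1`: the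
denominator of `σ(f) - a·f` has two roots differing by a positive integer. -/
theorem pdisp_pos_shift {C : Type*} [Field C] [IsAlgClosed C] [CharZero C]
    (σ : RatFunc C ≃ₐ[C] RatFunc C) (hσ : σ RatFunc.X = RatFunc.X + 1)
    (a : C) (ha : a ≠ 0) (f : RatFunc C)
    (hf : ¬∃ p : Polynomial C, algebraMap (Polynomial C) (RatFunc C) p = f) :
    ∃ ℓ : ℕ, 0 < ℓ ∧ ∃ α : C,
      Polynomial.eval α (σ f - RatFunc.C a * f).denom = 0 ∧
      Polynomial.eval (α + (ℓ : C)) (σ f - RatFunc.C a * f).denom = 0 := by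
  obtain ⟨β, hβ⟩ := exists_pole f hf
  obtain ⟨n, hn, hn'⟩ := exists_last_root f.denom_ne_zero hβ (one_ne_zero (α := C))
  obtain ⟨m, hm, hm'⟩ :=
    exists_last_root f.denom_ne_zero hβ (neg_ne_zero.mpr (one_ne_zero (α := C)))
  have hsymm : σ.symm RatFunc.X = RatFunc.X + RatFunc.C (-1) := by
    rw [AlgEquiv.symm_apply_eq]
    simp [hσ]
  have hσ' : σ RatFunc.X = RatFunc.X + RatFunc.C 1 := by simpa using hσ
  -- Scaling by `-a` neither creates nor removes poles, since `a` is a unit.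
  have hscale : ∀ α, (RatFunc.C (-a) * f).denom.eval α = 0 ↔ f.denom.eval α = 0 := by
    have hc : ∀ (b : C) (g : RatFunc C), (RatFunc.C b * g).denom ∣ g.denom := fun b g => by
      simpa using RatFunc.denom_mul_dvd (RatFunc.C b) g
    have hinv : RatFunc.C (-a)⁻¹ * (RatFunc.C (-a) * f) = f := by
      rw [← mul_assoc, ← map_mul, inv_mul_cancel₀ (neg_ne_zero.mpr ha), map_one, one_mul]
    refine fun α => ⟨Polynomial.eval_eq_zero_of_dvd_of_eval_eq_zero (hc _ _),
      Polynomial.eval_eq_zero_of_dvd_of_eval_eq_zero ?_⟩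
    simpa only [hinv] using hc (-a)⁻¹ (RatFunc.C (-a) * f)
  have hg : σ f - RatFunc.C a * f = σ f + RatFunc.C (-a) * f := by
    rw [map_neg]; ring
  rw [hg]
  refine ⟨n + m + 1, by omega, β + -1 * (m + 1), ?_, ?_⟩
  · refine pole_add ?_ (fun h => hm' ((hscale _).mp h))
    -- The pole `β - m` of `f = σ⁻¹ (σ f)` gives the pole `β - m - 1` of `σ f`.
    have := pole_of_shift_pole σ.symm hsymm (σ f) (α := β + -1 * m) (by simpa using hm)
    convert this using 2
    ring
  · rw [add_comm (σ f)]
    have e : β + -1 * ((m : C) + 1) + ((n + m + 1 : ℕ) : C) = β + 1 * n := by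
      push_cast; ring
    rw [e]
    refine pole_add ((hscale _).mpr hn) fun h => hn' ?_
    convert pole_of_shift_pole σ hσ' f h using 2
    ring
end

section
/- Let C be an algebraically closed field of characteristic 0, let q ∈ C be an element that is not a root of unity, let σ be the C-algebra automorphism of C(x) with σ(x) = qx, and let a ∈ C be nonzero. If f ∈ C(x) has a nonzero pole (i.e. the denominator of f in lowest terms has a nonzero root), then pdisp_q(σ(f) − a·f) > 0. -/
/-!
Call a rational function regular at `α` when its reduced denominator does not vanish at `α`, and
say it has a pole there otherwise. Since `(σ f)(x) = f (q x)`, the function `σ f` is regular at `α`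
iff `f` is regular at `q α`. Hence `σ f - a f` has a pole at `α` as soon as exactly one of
`α`, `q α` is a pole of `f` (this uses `a ≠ 0`).

Starting from a nonzero pole `β` of `f`, the orbit points `q ^ n β`, `n ∈ ℤ`, are pairwise distinct
and only finitely many are poles. So there are `M, m ≥ 0` such that `q ^ M β` is a pole of `f` but
`q ^ (M + 1) β` is not, and `q ^ (-m) β` is a pole but `q ^ (-m - 1) β` is not. Thus
`q ^ (-m - 1) β` and `q ^ M β` are both poles of `σ f - a f`, and they differ by the factor
`q ^ (M + m + 1)`.
-/

/-- `f` is regular at `α`: it can be written as a fraction of polynomials whose denominator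
(not necessarily the reduced one) does not vanish at `α`. -/
def RegularAt {C : Type*} [Field C] (α : C) (f : RatFunc C) : Prop :=
  ∃ p s : Polynomial C, s.eval α ≠ 0 ∧
    f * algebraMap (Polynomial C) (RatFunc C) s = algebraMap (Polynomial C) (RatFunc C) p

lemma regularAt_iff {C : Type*} [Field C] (α : C) (f : RatFunc C) :
    RegularAt α f ↔ f.denom.eval α ≠ 0 := by
  constructor
  · rintro ⟨p, s, hs, h⟩ h0
    have hs0 : s ≠ 0 := by rintro rfl; simp at hs
    have hs1 : algebraMap (Polynomial C) (RatFunc C) s ≠ 0 := RatFunc.algebraMap_ne_zero hs0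
    have hd : f.denom ∣ s := (RatFunc.denom_dvd hs0).2 ⟨p, by rw [eq_div_iff hs1, h]⟩
    exact hs (Polynomial.eval_eq_zero_of_dvd_of_eval_eq_zero hd h0)
  · intro h
    refine ⟨f.num, f.denom, h, ?_⟩
    have hd := RatFunc.algebraMap_ne_zero f.denom_ne_zero
    rw [← eq_div_iff hd, RatFunc.num_div_denom]

lemma RegularAt.sub {C : Type*} [Field C] {α : C} {f g : RatFunc C}
    (hf : RegularAt α f) (hg : RegularAt α g) : RegularAt α (f - g) := by
  obtain ⟨p, s, hs, h⟩ := hf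
  obtain ⟨p', s', hs', h'⟩ := hg
  refine ⟨p * s' - p' * s, s * s', by simp [hs, hs'], ?_⟩
  simp only [map_sub, map_mul]
  rw [← h, ← h']
  ring

lemma RegularAt.const_mul {C : Type*} [Field C] {α : C} {f : RatFunc C}
    (hf : RegularAt α f) (a : C) : RegularAt α (RatFunc.C a * f) := by
  obtain ⟨p, s, hs, h⟩ := hf
  refine ⟨Polynomial.C a * p, s, hs, ?_⟩
  rw [map_mul, RatFunc.algebraMap_C, mul_assoc, h]

/-- An automorphism with `σ x = q x` acts on polynomials by the substitution `x ↦ q x`. -/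
lemma sigma_algebraMap {C : Type*} [Field C] {q : C} (σ : RatFunc C ≃ₐ[C] RatFunc C)
    (hσ : σ RatFunc.X = RatFunc.C q * RatFunc.X) (p : Polynomial C) :
    σ (algebraMap (Polynomial C) (RatFunc C) p) =
      algebraMap (Polynomial C) (RatFunc C) (p.comp (Polynomial.C q * Polynomial.X)) := by
  have hC (c : C) : σ (RatFunc.C c) = RatFunc.C c := by
    rw [← RatFunc.algebraMap_eq_C]; exact σ.commutes c
  induction p using Polynomial.induction_on' with
  | add p r hp hr => simp [hp, hr]
  | monomial n c =>
    rw [← Polynomial.C_mul_X_pow_eq_monomial]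
    simp [hC, hσ, RatFunc.algebraMap_C, RatFunc.algebraMap_X]

lemma RegularAt.sigma {C : Type*} [Field C] {q : C} (σ : RatFunc C ≃ₐ[C] RatFunc C)
    (hσ : σ RatFunc.X = RatFunc.C q * RatFunc.X) {α : C} {f : RatFunc C}
    (hf : RegularAt (q * α) f) : RegularAt α (σ f) := by
  obtain ⟨p, s, hs, h⟩ := hf
  refine ⟨p.comp (Polynomial.C q * Polynomial.X), s.comp (Polynomial.C q * Polynomial.X), ?_, ?_⟩
  · simpa [Polynomial.eval_comp] using hs
  · rw [← sigma_algebraMap σ hσ, ← sigma_algebraMap σ hσ, ← map_mul, h]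

/-- The converse of `RegularAt.sigma`, obtained from it for `σ⁻¹`, which sends `x` to `q⁻¹ x`. -/
lemma RegularAt.of_sigma {C : Type*} [Field C] {q : C} (hq : q ≠ 0)
    (σ : RatFunc C ≃ₐ[C] RatFunc C)
    (hσ : σ RatFunc.X = RatFunc.C q * RatFunc.X) {α : C} {f : RatFunc C}
    (hf : RegularAt α (σ f)) : RegularAt (q * α) f := by
  have hσ' : σ.symm RatFunc.X = RatFunc.C q⁻¹ * RatFunc.X := by
    have hC : σ (RatFunc.C q⁻¹) = RatFunc.C q⁻¹ := by
      rw [← RatFunc.algebraMap_eq_C]; exact σ.commutes _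
    rw [AlgEquiv.symm_apply_eq, map_mul, hC, hσ, ← mul_assoc, ← map_mul, inv_mul_cancel₀ hq,
      map_one, one_mul]
  have := RegularAt.sigma (α := q * α) (f := σ f) σ.symm hσ' (by rwa [inv_mul_cancel_left₀ hq])
  simpa using this

/-- Going along the orbit `β, q β, q² β, …` from a root `β` of `d`, one meets a last root before
a non-root, since the orbit is infinite. -/
lemma exists_last_root_s15 {C : Type*} [Field C] {q : C} (hq0 : q ≠ 0)
    (hq : ∀ n : ℕ, 0 < n → q ^ n ≠ 1) {d : Polynomial C} (hd : d ≠ 0) {β : C} (hβ : β ≠ 0)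
    (h : d.eval β = 0) : ∃ n : ℕ, d.eval (q ^ n * β) = 0 ∧ d.eval (q ^ (n + 1) * β) ≠ 0 := by
  by_contra! hcon
  have hall : ∀ n : ℕ, d.eval (q ^ n * β) = 0 := by
    intro n
    induction n with
    | zero => simpa using h
    | succ n ih => exact hcon n ih
  have hinj : Function.Injective fun n : ℕ => q ^ n * β := by
    intro m n he
    by_contra hne
    wlog hmn : m < n generalizing m n
    · exact this he.symm (Ne.symm hne) (by omega)
    have he' : q ^ m = q ^ n := mul_right_cancel₀ hβ he
    refine hq (n - m) (by omega) ?_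
    apply mul_left_cancel₀ (pow_ne_zero m hq0)
    rw [← pow_add, mul_one, he']
    congr 1
    omega
  refine hd (Polynomial.eq_zero_of_infinite_isRoot d ?_)
  exact (Set.infinite_range_of_injective hinj).mono (by rintro _ ⟨n, rfl⟩; exact hall n)

/-- If `f ∈ C(x)` has a nonzero pole and `a ∈ C` is nonzero, then the polar dispersion
of `σ(f) - a·f` is positive for `σ(x) = q·x`, `q` not a root of unity: the denominator
of `σ(f) - a·f` has two nonzero roots of the form `α, q^ℓ·α` with `ℓ > 0`. -/
theorem pdisp_pos_q {C : Type*} [Field C] [IsAlgClosed C] [CharZero C]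
    (q : C) (hq : ∀ n : ℕ, 0 < n → q ^ n ≠ 1)
    (σ : RatFunc C ≃ₐ[C] RatFunc C) (hσ : σ RatFunc.X = RatFunc.C q * RatFunc.X)
    (a : C) (ha : a ≠ 0) (f : RatFunc C)
    (hf : ∃ α : C, α ≠ 0 ∧ Polynomial.eval α f.denom = 0) :
    ∃ ℓ : ℕ, 0 < ℓ ∧ ∃ α : C, α ≠ 0 ∧
      Polynomial.eval α (σ f - RatFunc.C a * f).denom = 0 ∧
      Polynomial.eval (q ^ ℓ * α) (σ f - RatFunc.C a * f).denom = 0 := by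
  obtain ⟨β, hβ, hpole⟩ := hf
  -- The hypothesis on `q` does not exclude `q = 0`, but injectivity of `σ` does.
  have hq0 : q ≠ 0 := by
    rintro rfl
    rw [map_zero, zero_mul, map_eq_zero_iff σ σ.injective] at hσ
    exact RatFunc.X_ne_zero hσ
  have hqi : ∀ n : ℕ, 0 < n → q⁻¹ ^ n ≠ 1 := fun n hn h => hq n hn (by simpa using h)
  obtain ⟨M, hM, hM'⟩ := exists_last_root_s15 hq0 hq f.denom_ne_zero hβ hpole
  obtain ⟨m, hm, hm'⟩ := exists_last_root_s15 (inv_ne_zero hq0) hqi f.denom_ne_zero hβ hpole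
  refine ⟨M + (m + 1), by omega, q⁻¹ ^ (m + 1) * β,
    mul_ne_zero (pow_ne_zero _ (inv_ne_zero hq0)) hβ, ?_, ?_⟩
  · by_contra hg
    have hσf : RegularAt (q⁻¹ ^ (m + 1) * β) (σ f) := by
      -- `σ f = (σ f - a f) - (-a) f`.
      have h1 := ((regularAt_iff _ _).2 hm').const_mul (-a)
      have := ((regularAt_iff _ _).2 hg).sub h1
      simpa using this
    have := hσf.of_sigma hq0 σ hσ
    rw [pow_succ', mul_assoc, mul_inv_cancel_left₀ hq0] at this
    exact (regularAt_iff _ _).1 this hm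
  · have he : q ^ (M + (m + 1)) * (q⁻¹ ^ (m + 1) * β) = q ^ M * β := by
      rw [pow_add, inv_pow]
      field_simp
    rw [he]
    by_contra hg
    have hσf : RegularAt (q ^ M * β) (σ f) := by
      refine RegularAt.sigma σ hσ ?_
      rw [← mul_assoc, ← pow_succ']
      exact (regularAt_iff _ _).2 hM'
    have h2 := (hσf.sub ((regularAt_iff _ _).2 hg)).const_mul a⁻¹
    rw [sub_sub_cancel, ← mul_assoc, ← map_mul, inv_mul_cancel₀ ha, map_one, one_mul] at h2
    exact (regularAt_iff _ _).1 h2 hM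
end

section
/- Let C be an algebraically closed field of characteristic 0, let σ be the C-algebra automorphism of C(x) with σ(x) = x + 1, let ∂ = d/dx be the standard derivation of C(x), and let a ∈ C be nonzero. Let b ∈ C(x) and suppose there exist constants c_0, …, c_N ∈ C, not all zero, and h ∈ C(x) such that Σ_{i=0}^N c_i·∂^i(b) = σ(h) − a·h. Then there exists e ∈ C(x) with b = σ(e) − a·e. -/
/-!
Write `M = σ - a`.  Since `C` is algebraically closed, `L` factors into operators `D - λ`, so it
is enough to show that `(D - λ) b = M h` forces `b` into the range of `M`
(`mem_range_of_sub_mem_range`).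

Hermite reduction (`exists_hermite`) writes `h = (D - λ) g + s` with `s` having at most simple
poles.  As `σ` commutes with `D` (`deriv_shift_comm`), `b' = b - M g` satisfies
`(D - λ) b' = M s`, and `M s` again has at most simple poles.  But `D - λ` turns a pole of order
`m ≥ 1` into a pole of order `m + 1 ≥ 2`, so `b'` has no pole: it is a polynomial
(`eq_algebraMap_of_simplePole`).  Finally every polynomial lies in the range of `M`
(`algebraMap_mem_range`), because `M` acts on the monomials triangularly, with diagonal entries
`1 - a` if `a ≠ 1`, and lowering the degree by exactly one if `a = 1`.
-/

namespace DescentShift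

open Polynomial

variable {C : Type*} [Field C]

/-- The rational function `s` has at most a simple pole at `α`: multiplied by `X - α` it becomes
a fraction `u / w` with `w(α) ≠ 0`. -/
def SimplePole (α : C) (s : RatFunc C) : Prop :=
  ∃ u w : C[X], w.eval α ≠ 0 ∧
    algebraMap C[X] (RatFunc C) ((X - Polynomial.C α) * w) * s = algebraMap C[X] (RatFunc C) u

lemma SimplePole.add {α : C} {s t : RatFunc C} (hs : SimplePole α s) (ht : SimplePole α t) :
    SimplePole α (s + t) := by
  obtain ⟨u, w, hw, e⟩ := hs
  obtain ⟨u', w', hw', e'⟩ := ht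
  refine ⟨u * w' + u' * w, w * w', by simp [hw, hw'], ?_⟩
  simp only [map_mul, map_add] at *
  rw [← e, ← e']
  ring

lemma SimplePole.smul {α : C} {s : RatFunc C} (a : C) (hs : SimplePole α s) :
    SimplePole α (a • s) := by
  obtain ⟨u, w, hw, e⟩ := hs
  refine ⟨a • u, w, hw, ?_⟩
  rw [mul_smul_comm, e, Polynomial.smul_eq_C_mul, map_mul, RatFunc.algebraMap_C,
    RatFunc.smul_eq_C_mul]

lemma aeval_X_eq (p : C[X]) : aeval (RatFunc.X : RatFunc C) p = algebraMap C[X] (RatFunc C) p := by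
  rw [← RatFunc.algebraMap_X, aeval_algebraMap_apply, aeval_X_left_apply]

lemma shift_algebraMap (σ : RatFunc C ≃ₐ[C] RatFunc C) (hσ : σ RatFunc.X = RatFunc.X + 1)
    (p : C[X]) :
    σ (algebraMap C[X] (RatFunc C) p) = algebraMap C[X] (RatFunc C) (p.comp (X + 1)) := by
  rw [← aeval_X_eq, ← aeval_X_eq, aeval_comp, ← aeval_algHom_apply, hσ]
  simp

lemma deriv_algebraMap (D : Derivation C (RatFunc C) (RatFunc C)) (hD : D RatFunc.X = 1)
    (p : C[X]) :
    D (algebraMap C[X] (RatFunc C) p) = algebraMap C[X] (RatFunc C) (derivative p) := by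
  rw [← aeval_X_eq, ← aeval_X_eq, Derivation.map_aeval, hD, smul_eq_mul, mul_one]

lemma exists_fraction (g : RatFunc C) : ∃ p q : C[X], q ≠ 0 ∧ IsCoprime p q ∧
    algebraMap C[X] (RatFunc C) q * g = algebraMap C[X] (RatFunc C) p := by
  refine ⟨g.num, g.denom, g.denom_ne_zero, g.isCoprime_num_denom, ?_⟩
  have h := RatFunc.num_div_denom g
  have h0 := RatFunc.algebraMap_ne_zero g.denom_ne_zero
  rw [div_eq_iff h0] at h
  rw [h, mul_comm]

lemma SimplePole.shift {α : C} {s : RatFunc C} (σ : RatFunc C ≃ₐ[C] RatFunc C)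
    (hσ : σ RatFunc.X = RatFunc.X + 1) (hs : SimplePole (α + 1) s) : SimplePole α (σ s) := by
  obtain ⟨u, w, hw, e⟩ := hs
  refine ⟨u.comp (X + 1), w.comp (X + 1), by simpa using hw, ?_⟩
  have := congrArg σ e
  rw [map_mul, shift_algebraMap σ hσ, shift_algebraMap σ hσ] at this
  rw [← this]
  congr 2
  rw [mul_comp, sub_comp, X_comp, C_comp, C_add, C_1]
  ring

/-- The shift commutes with differentiation: compare both sides after multiplying by a
denominator. -/
lemma deriv_shift_comm (σ : RatFunc C ≃ₐ[C] RatFunc C) (hσ : σ RatFunc.X = RatFunc.X + 1)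
    (D : Derivation C (RatFunc C) (RatFunc C)) (hD : D RatFunc.X = 1) (g : RatFunc C) :
    D (σ g) = σ (D g) := by
  have hpoly : ∀ p : C[X], D (σ (algebraMap C[X] (RatFunc C) p)) =
      σ (D (algebraMap C[X] (RatFunc C) p)) := by
    intro p
    rw [deriv_algebraMap D hD, shift_algebraMap σ hσ, shift_algebraMap σ hσ,
      deriv_algebraMap D hD, derivative_comp]
    simp
  obtain ⟨p, q, hq, -, e⟩ := exists_fraction g
  have h1 := congrArg (fun y => D (σ y)) e
  have h2 := congrArg (fun y => σ (D y)) e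
  simp only [map_mul, Derivation.leibniz, smul_eq_mul, map_add] at h1 h2
  rw [hpoly, hpoly] at h1
  have hq' : σ (algebraMap C[X] (RatFunc C) q) ≠ 0 := by
    simpa using hq
  apply mul_left_cancel₀ hq'
  linear_combination h1 - h2

/-- If `D b - l b` has only simple poles, then `b` has no pole.  At a root of multiplicity `m` of
the denominator of `b`, the left side would have a pole of order `m + 1`. -/
lemma eq_algebraMap_of_simplePole [IsAlgClosed C] [CharZero C]
    (D : Derivation C (RatFunc C) (RatFunc C)) (hD : D RatFunc.X = 1) (l : C) (b : RatFunc C)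
    (hb : ∀ α, SimplePole α (D b - l • b)) :
    ∃ p : C[X], b = algebraMap C[X] (RatFunc C) p := by
  obtain ⟨p, q, hq, hpq, e⟩ := exists_fraction b
  by_cases hdeg : q.degree = 0
  · obtain ⟨k, rfl⟩ : ∃ k, q = Polynomial.C k := ⟨_, eq_C_of_degree_eq_zero hdeg⟩
    have hk : k ≠ 0 := by rintro rfl; simp at hq
    refine ⟨Polynomial.C k⁻¹ * p, ?_⟩
    rw [map_mul, ← e, ← mul_assoc, ← map_mul, ← C_mul, inv_mul_cancel₀ hk]
    simp
  exfalso
  obtain ⟨α, hα⟩ := IsAlgClosed.exists_root q hdeg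
  have hpα : p.eval α ≠ 0 := by
    intro h0
    obtain ⟨x, y, hxy⟩ := hpq
    have := congrArg (eval α) hxy
    simp [h0, hα.eq_zero] at this
  obtain ⟨u, w, hw, hu⟩ := hb α
  obtain ⟨r, hr, hrα⟩ := exists_eq_pow_rootMultiplicity_mul_and_not_dvd q hq α
  have hm : 0 < q.rootMultiplicity α := (rootMultiplicity_pos hq).2 hα
  obtain ⟨m, hmm⟩ : ∃ m, q.rootMultiplicity α = m + 1 := ⟨_, (Nat.succ_pred_eq_of_pos hm).symm⟩
  rw [hmm] at hr
  rw [dvd_iff_isRoot, IsRoot.def] at hrα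
  have hDe := congrArg D e
  rw [Derivation.leibniz, deriv_algebraMap D hD, deriv_algebraMap D hD, smul_eq_mul,
    smul_eq_mul] at hDe
  have key : (X - Polynomial.C α) * w * (derivative p * q - p * derivative q
      - Polynomial.C l * (p * q)) = u * q ^ 2 := by
    apply RatFunc.algebraMap_injective C
    rw [RatFunc.smul_eq_C_mul, ← RatFunc.algebraMap_C] at hu
    simp only [map_mul, map_sub, map_pow] at *
    rw [← hu, ← hDe, ← e]
    ring
  have hd : derivative q = (X - Polynomial.C α) ^ m *
      (((m + 1 : ℕ) : C[X]) * r + (X - Polynomial.C α) * derivative r) := by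
    rw [hr, derivative_mul, derivative_X_sub_C_pow]
    simp only [Nat.add_sub_cancel]
    push_cast
    simp
    ring
  have hX : (X - Polynomial.C α) ^ (m + 1) ≠ 0 := pow_ne_zero _ (X_sub_C_ne_zero α)
  -- Cancel `(X - α)^(m+1)` and evaluate at `α`.
  have key2 : w * ((X - Polynomial.C α) * (derivative p * r)
      - p * (((m + 1 : ℕ) : C[X]) * r + (X - Polynomial.C α) * derivative r)
      - (X - Polynomial.C α) * (Polynomial.C l * (p * r)))
      = (X - Polynomial.C α) * (u * (X - Polynomial.C α) ^ m * r ^ 2) := by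
    apply mul_left_cancel₀ hX
    rw [hd, hr] at key
    linear_combination key
  have := congrArg (eval α) key2
  have hm1 : (m : C) + 1 ≠ 0 := by exact_mod_cast Nat.succ_ne_zero m
  simp [hw, hpα, hrα, hm1] at this

/-- Hermite reduction modulo `D - l`: the multiple poles of `p / q` are lowered one order at a
time, by subtracting multiples of `(D - l) (X - α)^(-(m-1))`. -/
lemma exists_hermite [CharZero C]
    (D : Derivation C (RatFunc C) (RatFunc C)) (hD : D RatFunc.X = 1) (l : C) (n : ℕ) :
    ∀ (h : RatFunc C) (p q : C[X]), q ≠ 0 → q.natDegree = n →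
      algebraMap C[X] (RatFunc C) q * h = algebraMap C[X] (RatFunc C) p →
      ∃ g s : RatFunc C, h = D g - l • g + s ∧ ∀ α, SimplePole α s := by
  induction n with
  | zero =>
    intro h p q hq hn e
    refine ⟨0, h, by simp, fun α => ⟨(X - Polynomial.C α) * p, q, ?_, ?_⟩⟩
    · rw [eq_C_of_natDegree_eq_zero hn] at hq ⊢
      simpa using hq
    · rw [map_mul, map_mul, mul_assoc, e]
  | succ n ih =>
    intro h p q hq hn e
    by_cases hsimple : ∀ α, q.rootMultiplicity α ≤ 1
    · refine ⟨0, h, by simp, fun α => ?_⟩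
      obtain ⟨r, hr, hrα⟩ := exists_eq_pow_rootMultiplicity_mul_and_not_dvd q hq α
      rw [dvd_iff_isRoot, IsRoot.def] at hrα
      have h1 := hsimple α
      interval_cases hmm : q.rootMultiplicity α
      · refine ⟨(X - Polynomial.C α) * p, r, hrα, ?_⟩
        rw [pow_zero, one_mul] at hr
        rw [map_mul, map_mul, mul_assoc, ← hr, e]
      · refine ⟨p, r, hrα, ?_⟩
        rw [pow_one] at hr
        rw [← hr, e]
    push Not at hsimple
    obtain ⟨α, hα⟩ := hsimple
    obtain ⟨r, hr, hrα⟩ := exists_eq_pow_rootMultiplicity_mul_and_not_dvd q hq α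
    rw [dvd_iff_isRoot, IsRoot.def] at hrα
    obtain ⟨m, hmm⟩ : ∃ m, q.rootMultiplicity α = m + 2 := ⟨_, (Nat.sub_add_cancel hα).symm⟩
    rw [hmm] at hr
    have hm1 : (m : C) + 1 ≠ 0 := by exact_mod_cast Nat.succ_ne_zero m
    have hr0 : r ≠ 0 := by rintro rfl; simp at hrα
    -- The coefficient for which the numerator of `h - (D - l) (k (X - α)^(-(m+1)))` vanishes
    -- at `α`.
    set k : C := - p.eval α / ((m + 1) * r.eval α) with hk
    set y : RatFunc C := algebraMap C[X] (RatFunc C) (X - Polynomial.C α) with hy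
    have hy0 : y ≠ 0 := RatFunc.algebraMap_ne_zero (X_sub_C_ne_zero α)
    have hDy : D y = 1 := by rw [hy, deriv_algebraMap D hD]; simp
    set g : RatFunc C := k • (y ^ (m + 1))⁻¹ with hg
    have hDg : y ^ (m + 2) * D g = algebraMap C[X] (RatFunc C) (- Polynomial.C ((m + 1) * k)) := by
      have h1 : y ^ (m + 1) * g = RatFunc.C k := by
        rw [hg, RatFunc.smul_eq_C_mul]; field_simp
      have h2 := congrArg D h1
      have h3 : D (RatFunc.C k) = 0 := D.map_algebraMap k
      rw [Derivation.leibniz, Derivation.leibniz_pow, hDy, h3] at h2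
      simp only [smul_eq_mul, nsmul_eq_mul, Nat.add_sub_cancel, mul_one] at h2
      push_cast at h2
      simp only [map_neg, RatFunc.algebraMap_C, map_mul, map_add, map_natCast, map_one]
      linear_combination y * h2 - ((m : RatFunc C) + 1) * h1
    have hlg : y ^ (m + 2) * (l • g) = y * algebraMap C[X] (RatFunc C) (Polynomial.C (l * k)) := by
      rw [hg]
      simp only [RatFunc.smul_eq_C_mul, RatFunc.algebraMap_C, map_mul]
      field_simp
      ring
    set P : C[X] := p + Polynomial.C ((m + 1) * k) * r
      + (X - Polynomial.C α) * Polynomial.C (l * k) * r with hP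
    have hPα : IsRoot P α := by
      rw [IsRoot.def, hP]
      simp only [eval_add, eval_mul, eval_C, eval_sub, eval_X, sub_self, zero_mul, add_zero]
      rw [hk]
      field_simp
      ring
    obtain ⟨P', hP'⟩ := dvd_iff_isRoot.2 hPα
    have hq' : (X - Polynomial.C α) ^ (m + 1) * r ≠ 0 :=
      mul_ne_zero (pow_ne_zero _ (X_sub_C_ne_zero α)) hr0
    have hqq : q = (X - Polynomial.C α) * ((X - Polynomial.C α) ^ (m + 1) * r) := by
      rw [hr]; ring
    have hdeg : ((X - Polynomial.C α) ^ (m + 1) * r).natDegree = n := by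
      have := hn
      rw [hqq, natDegree_mul (X_sub_C_ne_zero α) hq', natDegree_X_sub_C] at this
      omega
    obtain ⟨g', s, hs, hs'⟩ := ih (h - (D g - l • g)) P' _ hq' hdeg (by
      apply mul_left_cancel₀ hy0
      rw [← mul_assoc, hy, ← map_mul, ← map_mul, ← hP', ← hqq, hP, mul_sub, mul_sub, e, hr]
      simp only [map_mul, map_pow, map_add, map_neg, ← hy] at hDg hlg ⊢
      linear_combination (-algebraMap C[X] (RatFunc C) r) * hDg
        + algebraMap C[X] (RatFunc C) r * hlg)
    refine ⟨g + g', s, ?_, hs'⟩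
    rw [map_add, smul_add]
    linear_combination hs

/-- The operator `σ - a` on rational functions. -/
noncomputable def shiftOp (σ : RatFunc C ≃ₐ[C] RatFunc C) (a : C) :
    RatFunc C →ₗ[C] RatFunc C :=
  σ.toLinearMap - a • LinearMap.id

lemma shiftOp_apply (σ : RatFunc C ≃ₐ[C] RatFunc C) (a : C) (e : RatFunc C) :
    shiftOp σ a e = σ e - a • e := rfl

lemma X_pow_mem_range [CharZero C] (σ : RatFunc C ≃ₐ[C] RatFunc C)
    (hσ : σ RatFunc.X = RatFunc.X + 1) (a : C) (n : ℕ) :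
    (RatFunc.X : RatFunc C) ^ n ∈ LinearMap.range (shiftOp σ a) := by
  induction n using Nat.strong_induction_on with
  | _ n ih =>
    have hlow : ∀ f : ℕ → ℕ, (∑ i ∈ Finset.range n, (RatFunc.X : RatFunc C) ^ i * (f i : RatFunc C))
        ∈ LinearMap.range (shiftOp σ a) := by
      intro f
      refine Submodule.sum_mem _ fun i hi => ?_
      rw [mul_comm, ← nsmul_eq_mul]
      exact Submodule.smul_of_tower_mem _ _ (ih i (Finset.mem_range.1 hi))
    -- It suffices to realise a nonzero multiple of `X ^ n` modulo lower powers.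
    have hfin : ∀ (k : C) (e : RatFunc C) (f : ℕ → ℕ), k ≠ 0 →
        shiftOp σ a e = k • (RatFunc.X : RatFunc C) ^ n
          + ∑ i ∈ Finset.range n, (RatFunc.X : RatFunc C) ^ i * (f i : RatFunc C) →
        (RatFunc.X : RatFunc C) ^ n ∈ LinearMap.range (shiftOp σ a) := by
      intro k e f hk he
      have h1 : k • (RatFunc.X : RatFunc C) ^ n ∈ LinearMap.range (shiftOp σ a) := by
        rw [← Submodule.add_mem_iff_left _ (hlow f), ← he]
        exact ⟨e, rfl⟩
      exact (Submodule.smul_mem_iff _ hk).1 h1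
    by_cases ha : a = 1
    · refine hfin ((n : C) + 1) (RatFunc.X ^ (n + 1)) (fun i => (n + 1).choose i)
        (by exact_mod_cast Nat.succ_ne_zero n) ?_
      rw [shiftOp_apply, map_pow, hσ, add_pow, Finset.sum_range_succ, Finset.sum_range_succ, ha]
      simp [RatFunc.smul_eq_C_mul]
      ring
    · refine hfin (1 - a) (RatFunc.X ^ n) (fun i => n.choose i) (sub_ne_zero.2 (Ne.symm ha)) ?_
      rw [shiftOp_apply, map_pow, hσ, add_pow, Finset.sum_range_succ]
      simp [RatFunc.smul_eq_C_mul]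
      ring

lemma algebraMap_mem_range [CharZero C] (σ : RatFunc C ≃ₐ[C] RatFunc C)
    (hσ : σ RatFunc.X = RatFunc.X + 1) (a : C) (p : C[X]) :
    algebraMap C[X] (RatFunc C) p ∈ LinearMap.range (shiftOp σ a) := by
  rw [← aeval_X_eq, aeval_eq_sum_range]
  exact Submodule.sum_mem _ fun i _ => Submodule.smul_mem _ _ (X_pow_mem_range σ hσ a i)

/-- The cokernel of `σ - a` has no `(D - l)`-torsion. -/
lemma mem_range_of_sub_mem_range [IsAlgClosed C] [CharZero C]
    (σ : RatFunc C ≃ₐ[C] RatFunc C) (hσ : σ RatFunc.X = RatFunc.X + 1)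
    (D : Derivation C (RatFunc C) (RatFunc C)) (hD : D RatFunc.X = 1) (a l : C) (b : RatFunc C)
    (hb : D b - l • b ∈ LinearMap.range (shiftOp σ a)) :
    b ∈ LinearMap.range (shiftOp σ a) := by
  obtain ⟨h, hh⟩ := hb
  obtain ⟨p, q, hq, -, e⟩ := exists_fraction h
  obtain ⟨g, s, hs, hs'⟩ := exists_hermite D hD l _ h p q hq rfl e
  have hred : D (b - shiftOp σ a g) - l • (b - shiftOp σ a g) = σ s + (-a) • s := by
    rw [hs] at hh
    simp only [shiftOp_apply, map_add, map_sub, deriv_shift_comm σ hσ D hD,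
      RatFunc.smul_eq_C_mul, map_neg] at hh ⊢
    have hσl : ∀ y, σ (RatFunc.C l * y) = RatFunc.C l * σ y := by
      intro y
      rw [map_mul, ← RatFunc.algebraMap_eq_C, σ.commutes]
    have hDa : ∀ y, D (RatFunc.C a * y) = RatFunc.C a * D y := by
      intro y
      rw [← RatFunc.smul_eq_C_mul, D.map_smul, RatFunc.smul_eq_C_mul]
    simp only [hσl, hDa] at hh ⊢
    linear_combination -hh
  obtain ⟨P, hP⟩ := eq_algebraMap_of_simplePole D hD l (b - shiftOp σ a g) (fun α => by
    rw [hred]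
    exact ((hs' (α + 1)).shift σ hσ).add ((hs' α).smul (-a)))
  have h1 := algebraMap_mem_range σ hσ a P
  rw [← hP] at h1
  exact (Submodule.sub_mem_iff_left _ (LinearMap.mem_range_self _ g)).1 h1

/-- The cokernel of `σ - a` is torsion-free over `C[D]`: peel off one linear factor of `P` at a
time. -/
lemma mem_range_of_aeval_mem_range [IsAlgClosed C] [CharZero C]
    (σ : RatFunc C ≃ₐ[C] RatFunc C) (hσ : σ RatFunc.X = RatFunc.X + 1)
    (D : Derivation C (RatFunc C) (RatFunc C)) (hD : D RatFunc.X = 1) (a : C) (b : RatFunc C)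
    (n : ℕ) : ∀ P : C[X], P ≠ 0 → P.natDegree = n →
      aeval (D : Module.End C (RatFunc C)) P b ∈ LinearMap.range (shiftOp σ a) →
      b ∈ LinearMap.range (shiftOp σ a) := by
  induction n with
  | zero =>
    intro P hP hn hb
    rw [eq_C_of_natDegree_eq_zero hn] at hP hb
    rw [aeval_C, Module.algebraMap_end_apply] at hb
    exact (Submodule.smul_mem_iff _ (by simpa using hP)).1 hb
  | succ n ih =>
    intro P hP hn hb
    obtain ⟨l, hl⟩ := IsAlgClosed.exists_root P (by
      rw [degree_eq_natDegree hP, hn]; exact_mod_cast Nat.succ_ne_zero n)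
    obtain ⟨Q, rfl⟩ := dvd_iff_isRoot.2 hl
    have hQ : Q ≠ 0 := right_ne_zero_of_mul hP
    rw [natDegree_mul (X_sub_C_ne_zero l) hQ, natDegree_X_sub_C] at hn
    refine ih Q hQ (by omega) (mem_range_of_sub_mem_range σ hσ D hD a l _ ?_)
    simpa using hb

end DescentShift

/-- Descent lemma for the shift: let `σ(x) = x + 1` and `∂ = d/dx` on `C(x)`, `a ∈ C`
nonzero.  If `L(b) = σ(h) - a·h` for some `h ∈ C(x)` and some nonzero
constant-coefficient operator `L = Σ c_i ∂^i`, then `b = σ(e) - a·e` for some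
`e ∈ C(x)`. -/
theorem descent_shift {C : Type*} [Field C] [IsAlgClosed C] [CharZero C]
    (σ : RatFunc C ≃ₐ[C] RatFunc C) (hσ : σ RatFunc.X = RatFunc.X + 1)
    (D : Derivation C (RatFunc C) (RatFunc C)) (hD : D RatFunc.X = 1)
    (a : C) (ha : a ≠ 0) (b : RatFunc C)
    (N : ℕ) (c : Fin (N + 1) → C) (hc : c ≠ 0) (h : RatFunc C)
    (heq : ∑ i : Fin (N + 1), RatFunc.C (c i) * (⇑D)^[(i : ℕ)] b
        = σ h - RatFunc.C a * h) :
    ∃ e : RatFunc C, b = σ e - RatFunc.C a * e := by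
  classical
  let P : Polynomial C := ∑ i : Fin (N + 1), Polynomial.monomial (i : ℕ) (c i)
  have hP : P ≠ 0 := by
    intro h0
    apply hc
    funext i
    have := congrArg (fun p => Polynomial.coeff p (i : ℕ)) h0
    simpa [P, Polynomial.finsetSum_coeff, Polynomial.coeff_monomial, Fin.val_inj] using this
  obtain ⟨e, he⟩ := DescentShift.mem_range_of_aeval_mem_range σ hσ D hD a b _ P hP rfl ⟨h, by
    rw [DescentShift.shiftOp_apply, RatFunc.smul_eq_C_mul, ← heq]
    simp only [P, map_sum, LinearMap.sum_apply, Polynomial.aeval_monomial, Module.End.mul_apply,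
      Module.algebraMap_end_apply, Module.End.pow_apply, RatFunc.smul_eq_C_mul]
    rfl⟩
  exact ⟨e, by rw [← he, DescentShift.shiftOp_apply, RatFunc.smul_eq_C_mul]⟩
end

section
/- Let C be an algebraically closed field of characteristic 0, let q ∈ C be an element that is not a root of unity, let σ be the C-algebra automorphism of C(x) with σ(x) = qx, let ∂ = x·d/dx, and let a ∈ C be nonzero. Let b ∈ C(x) and suppose there exist constants c_0, …, c_N ∈ C, not all zero, and h ∈ C(x) such that Σ_{i=0}^N c_i·∂^i(b) = σ(h) − a·h. Then: (a) if a = q^r for some r ∈ ℤ, there exist e ∈ C(x) and c ∈ C with b = σ(e) − a·e + c·x^r; (b) if a is not an integer power of q, there exists e ∈ C(x) with b = σ(e) − a·e. -/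
/-!
The argument is a comparison of poles. By partial fractions (`span_gens`), `C(x)` is spanned by
the monomials `x^n`, `n ∈ ℤ`, and the functions `(x - β)^{-(k+1)}` with `β ≠ 0`; the coefficient of
the latter is the linear form `coord β k`, defined through Laurent expansion at `β`.

Write `T f = σ f - a f`. Since `T x^n = (q^n - a) x^n`, every monomial with `q^n ≠ a` is in the image
of `T`; and since `σ` sends a pole at `β` to a pole at `β / q`, modulo the image of `T` any pole can
be moved along its orbit under `q^ℤ`. Hence (`decomposition`) `b = T e + m + w`, where `m` is a
combination of the `x^n` with `q^n = a` (there is at most one such `n`), and all poles of `w` lie in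
a set containing one point of each orbit in `C \ {0}`.

It remains to see that `w = 0`. The operator `L = Σ c_i ∂^i` commutes with `T`, and `L m` has no pole
outside `0` and `∞`, so there `L w` has the same principal parts as `T (h - L e)`. If `w` had a pole
at `α`, then so would `L w`, because `∂` raises the order of a pole `α ≠ 0` by exactly one
(`exists_coord_constOp_ne_zero`), and `L w` would have no other pole in the orbit of `α`. But `T g`
never has poles at exactly one point of an orbit (`coord_twist_eq_zero`): along the orbit the
coefficients of `g` would be geometric with nonzero ratio on each side of `α`, and finitely many of
them are nonzero.
-/

namespace DescentQ

/-! ### Partial fractions -/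

open scoped RatFunc

variable {C : Type*} [Field C]

/-- The partial fraction `(x - β)^{-(k+1)}`. -/
noncomputable def pol (β : C) (k : ℕ) : RatFunc C :=
  ((RatFunc.X - RatFunc.C β) ^ (k + 1))⁻¹

lemma X_sub_C_ne_zero (β : C) : (RatFunc.X - RatFunc.C β : RatFunc C) ≠ 0 := by
  rw [← RatFunc.algebraMap_X, ← RatFunc.algebraMap_C, ← map_sub]
  exact RatFunc.algebraMap_ne_zero (Polynomial.X_sub_C_ne_zero β)

lemma coe_C (c : C) :
    algebraMap (RatFunc C) (LaurentSeries C) (RatFunc.C c) = HahnSeries.C c := by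
  rw [← RatFunc.algebraMap_C]
  refine (RatFunc.coe_coe (Polynomial.C c)).symm.trans ?_
  rw [Polynomial.coe_C, HahnSeries.ofPowerSeries_C]

/-- The principal-part coefficient of `(x - α)^{-(k+1)}` at `α`, read off from the Laurent
expansion of `f (x + α)` at `0`. -/
noncomputable def coord (α : C) (k : ℕ) : RatFunc C →ₗ[C] C where
  toFun f := HahnSeries.coeff (algebraMap (RatFunc C) (LaurentSeries C) (RatFunc.laurent α f))
    (-(k + 1 : ℤ))
  map_add' f g := by simp
  map_smul' c f := by
    rw [RatFunc.smul_eq_C_mul, map_mul, RatFunc.laurent_C, map_mul, coe_C, HahnSeries.C_mul_eq_smul]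
    simp

lemma coord_apply (α : C) (k : ℕ) (f : RatFunc C) :
    coord α k f = HahnSeries.coeff
      (algebraMap (RatFunc C) (LaurentSeries C) (RatFunc.laurent α f)) (-(k + 1 : ℤ)) := rfl

/-- A function `(x - β)^n` with `β ≠ α` is regular at `α`: its expansion there is the power of a
unit of the power series ring. -/
lemma coord_regular {α β : C} (h : β ≠ α) (k : ℕ) (n : ℤ) :
    coord α k ((RatFunc.X - RatFunc.C β) ^ n) = 0 := by
  have hu : IsUnit (PowerSeries.X + PowerSeries.C (α - β)) := by
    rw [PowerSeries.isUnit_iff_constantCoeff]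
    simpa using sub_ne_zero.2 h.symm
  obtain ⟨u, hu⟩ := hu
  have e : algebraMap (RatFunc C) (LaurentSeries C)
      (RatFunc.laurent α ((RatFunc.X - RatFunc.C β))) =
      HahnSeries.ofPowerSeries ℤ C (u : PowerSeries C) := by
    rw [hu, map_sub, RatFunc.laurent_X, RatFunc.laurent_C, add_sub_assoc, ← map_sub, map_add,
      RatFunc.coe_X, map_add, HahnSeries.ofPowerSeries_X, HahnSeries.ofPowerSeries_C, coe_C]
  have e2 : HahnSeries.ofPowerSeries ℤ C (u : PowerSeries C) ^ n
      = HahnSeries.ofPowerSeries ℤ C ((u ^ n : (PowerSeries C)ˣ) : PowerSeries C) := by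
    have := map_zpow (Units.map (HahnSeries.ofPowerSeries ℤ C).toMonoidHom) u n
    have := congrArg Units.val this
    rw [Units.val_zpow_eq_zpow_val] at this
    exact this.symm
  rw [coord_apply, map_zpow₀, map_zpow₀, e, e2, HahnSeries.ofPowerSeries_apply]
  apply HahnSeries.embDomain_of_notMem_range
  rintro ⟨m, hm⟩
  simp at hm
  omega

lemma coord_X_zpow {α : C} (h : α ≠ 0) (k : ℕ) (n : ℤ) :
    coord α k (RatFunc.X ^ n) = 0 := by
  simpa using coord_regular h.symm k n

lemma coord_pol_of_ne {α β : C} (h : β ≠ α) (k j : ℕ) : coord α k (pol β j) = 0 := by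
  have := coord_regular h k (-((j + 1 : ℕ) : ℤ))
  rwa [zpow_neg, zpow_natCast] at this

lemma coord_pol_self (α : C) (k j : ℕ) : coord α k (pol α j) = if j = k then 1 else 0 := by
  rw [coord_apply, pol, map_inv₀, map_pow, map_sub, RatFunc.laurent_X, RatFunc.laurent_C,
    add_sub_cancel_right, map_inv₀, map_pow, RatFunc.coe_X, HahnSeries.single_pow]
  rw [HahnSeries.inv_single, HahnSeries.coeff_single]
  simp
  grind

open scoped Classical in
lemma coord_pol (α β : C) (k j : ℕ) :
    coord α k (pol β j) = if β = α ∧ j = k then 1 else 0 := by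
  by_cases h : β = α
  · subst h; simp [coord_pol_self]
  · simp [coord_pol_of_ne h, h]

variable (C) in
/-- The monomials `x^n`, `n ∈ ℤ`, and the partial fractions at nonzero poles. -/
def gens : Set (RatFunc C) :=
  Set.range (fun n : ℤ => (RatFunc.X : RatFunc C) ^ n) ∪
    {f | ∃ (β : C) (k : ℕ), β ≠ 0 ∧ f = pol β k}

lemma zpow_mem (n : ℤ) : (RatFunc.X : RatFunc C) ^ n ∈ Submodule.span C (gens C) :=
  Submodule.subset_span (Or.inl ⟨n, rfl⟩)

lemma pol_mem {β : C} (hβ : β ≠ 0) (k : ℕ) : pol β k ∈ Submodule.span C (gens C) :=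
  Submodule.subset_span (Or.inr ⟨β, k, hβ, rfl⟩)

lemma zpow_mul_inv_mem (n : ℤ) (γ : C) :
    (RatFunc.X : RatFunc C) ^ n * (RatFunc.X - RatFunc.C γ)⁻¹ ∈ Submodule.span C (gens C) := by
  by_cases hγ : γ = 0
  · subst hγ
    have : (RatFunc.X : RatFunc C) ^ n * (RatFunc.X - RatFunc.C 0)⁻¹ = RatFunc.X ^ (n - 1) := by
      rw [map_zero, sub_zero, zpow_sub_one₀ RatFunc.X_ne_zero]
    rw [this]; exact zpow_mem _
  -- dividing `x^(m+1) = x^m (x - γ) + γ x^m` by `x - γ` lets the exponent move both ways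
  have key (m : ℤ) : (RatFunc.X : RatFunc C) ^ (m + 1) * (RatFunc.X - RatFunc.C γ)⁻¹ =
      RatFunc.X ^ m + γ • ((RatFunc.X : RatFunc C) ^ m * (RatFunc.X - RatFunc.C γ)⁻¹) := by
    have := X_sub_C_ne_zero γ
    rw [RatFunc.smul_eq_C_mul, zpow_add_one₀ RatFunc.X_ne_zero]
    field_simp
    ring
  induction n using Int.induction_on with
  | zero => simpa [pol] using pol_mem hγ 0
  | succ i ih => rw [key]; exact add_mem (zpow_mem _) (Submodule.smul_mem _ _ ih)
  | pred i ih =>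
    have h := key (-(i : ℤ) - 1)
    rw [sub_add_cancel] at h
    rw [h] at ih
    exact (Submodule.smul_mem_iff _ hγ).1 ((add_mem_cancel_left (zpow_mem _)).1 ih)

lemma pol_mul_inv_mem {β : C} (hβ : β ≠ 0) (k : ℕ) (γ : C) :
    pol β k * (RatFunc.X - RatFunc.C γ)⁻¹ ∈ Submodule.span C (gens C) := by
  have hb := X_sub_C_ne_zero β
  have hg := X_sub_C_ne_zero γ
  by_cases h : β = γ
  · subst h
    have : pol β k * (RatFunc.X - RatFunc.C β)⁻¹ = pol β (k + 1) := by
      simp only [pol]; rw [pow_succ _ (k + 1), mul_inv]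
    rw [this]; exact pol_mem hβ _
  have hs : (RatFunc.C β - RatFunc.C γ : RatFunc C) ≠ 0 := by
    rw [← map_sub]; exact (map_ne_zero _).2 (sub_ne_zero.2 h)
  -- resolvent identity for the two simple poles
  have key (m : ℕ) : ((RatFunc.X - RatFunc.C β) ^ (m + 1))⁻¹ * (RatFunc.X - RatFunc.C γ)⁻¹ =
      (β - γ)⁻¹ • (pol β m -
        ((RatFunc.X - RatFunc.C β) ^ m)⁻¹ * (RatFunc.X - RatFunc.C γ)⁻¹) := by
    rw [RatFunc.smul_eq_C_mul, pol, map_inv₀, map_sub]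
    field_simp
    ring
  induction k with
  | zero =>
    rw [pol, key]
    refine Submodule.smul_mem _ _ (sub_mem (pol_mem hβ _) ?_)
    simpa using zpow_mul_inv_mem 0 γ
  | succ k ih =>
    rw [pol, key]
    exact Submodule.smul_mem _ _ (sub_mem (pol_mem hβ _) ih)

lemma mul_inv_mem {f : RatFunc C} (hf : f ∈ Submodule.span C (gens C)) (γ : C) :
    f * (RatFunc.X - RatFunc.C γ)⁻¹ ∈ Submodule.span C (gens C) := by
  induction hf using Submodule.span_induction with
  | mem f hf =>
    obtain ⟨n, rfl⟩ | ⟨β, k, hβ, rfl⟩ := hf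
    · exact zpow_mul_inv_mem n γ
    · exact pol_mul_inv_mem hβ k γ
  | zero => simp
  | add f g _ _ hf hg => rw [add_mul]; exact add_mem hf hg
  | smul c f _ hf => rw [smul_mul_assoc]; exact Submodule.smul_mem _ _ hf

/-- Existence of partial fraction decompositions over an algebraically closed field. -/
lemma span_gens [IsAlgClosed C] : Submodule.span C (gens C) = ⊤ := by
  rw [eq_top_iff]
  rintro f -
  induction f using RatFunc.induction_on with
  | _ p d hd =>
  have hp : algebraMap (Polynomial C) (RatFunc C) p ∈ Submodule.span C (gens C) := by
    induction p using Polynomial.induction_on' with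
    | add p q hp hq => rw [map_add]; exact add_mem hp hq
    | monomial n c =>
      rw [← Polynomial.C_mul_X_pow_eq_monomial, map_mul, map_pow, RatFunc.algebraMap_X,
        RatFunc.algebraMap_C, ← RatFunc.smul_eq_C_mul, ← zpow_natCast]
      exact Submodule.smul_mem _ _ (zpow_mem _)
  have hs := (IsAlgClosed.splits d).eq_prod_roots
  generalize d.roots = s at hs
  rw [hs, map_mul, RatFunc.algebraMap_C, div_eq_mul_inv, mul_inv, mul_left_comm, ← map_inv₀,
    ← RatFunc.smul_eq_C_mul]
  refine Submodule.smul_mem _ _ ?_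
  clear hs
  induction s using Multiset.induction_on with
  | empty => simpa using hp
  | cons γ s ih =>
    rw [Multiset.map_cons, Multiset.prod_cons, map_mul, mul_inv, mul_comm _⁻¹, ← mul_assoc,
      map_sub, RatFunc.algebraMap_X, RatFunc.algebraMap_C]
    exact mul_inv_mem ih γ

lemma gen_ext [IsAlgClosed C] {M : Type*} [AddCommMonoid M] [Module C M]
    {f g : RatFunc C →ₗ[C] M} (hX : ∀ n : ℤ, f (RatFunc.X ^ n) = g (RatFunc.X ^ n))
    (hpol : ∀ (β : C) (k : ℕ), β ≠ 0 → f (pol β k) = g (pol β k)) : f = g := by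
  refine LinearMap.ext_on span_gens ?_
  rintro _ (⟨n, rfl⟩ | ⟨β, k, hβ, rfl⟩)
  · exact hX n
  · exact hpol β k hβ

/-- A rational function has finitely many poles. -/
lemma finite_coord [IsAlgClosed C] (k : ℕ) (f : RatFunc C) :
    {α : C | α ≠ 0 ∧ coord α k f ≠ 0}.Finite := by
  have hf : f ∈ Submodule.span C (gens C) := by rw [span_gens]; trivial
  induction hf using Submodule.span_induction with
  | mem f hf =>
    obtain ⟨n, rfl⟩ | ⟨β, j, hβ, rfl⟩ := hf
    · refine Set.finite_empty.subset ?_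
      rintro α ⟨h, h'⟩
      exact h' (coord_X_zpow h k n)
    · refine (Set.finite_singleton β).subset ?_
      rintro α ⟨h, h'⟩
      by_contra hne
      exact h' (coord_pol_of_ne (Ne.symm hne) k j)
  | zero => simp
  | add f g _ _ hf hg =>
    refine (hf.union hg).subset ?_
    rintro α ⟨h, h'⟩
    by_contra hne
    simp only [Set.mem_union, Set.mem_ofPred_eq, not_or, not_and, not_not] at hne
    exact h' (by rw [map_add, hne.1 h, hne.2 h, add_zero])
  | smul c f _ hf =>
    refine hf.subset ?_
    rintro α ⟨h, h'⟩
    refine ⟨h, fun h0 => h' ?_⟩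
    rw [map_smul, h0, smul_zero]

/-! ### The derivation -/

section Der

variable (D : Derivation C (RatFunc C) (RatFunc C))

lemma D_X_zpow (hD : D RatFunc.X = RatFunc.X) (n : ℤ) : D (RatFunc.X ^ n) = (n : C) • RatFunc.X ^ n := by
  rw [Derivation.leibniz_zpow, hD, smul_eq_mul, ← zpow_add_one₀ RatFunc.X_ne_zero, sub_add_cancel,
    Int.cast_smul_eq_zsmul]

lemma D_pol (hD : D RatFunc.X = RatFunc.X) (β : C) (k : ℕ) :
    D (pol β k) = -((k : C) + 1) • pol β k - (((k : C) + 1) * β) • pol β (k + 1) := by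
  have hb := X_sub_C_ne_zero β
  have hC : D (RatFunc.C β) = 0 := by
    rw [← RatFunc.algebraMap_eq_C]; exact D.map_algebraMap β
  rw [pol, pol, Derivation.leibniz_inv, Derivation.leibniz_pow, map_sub, hD, hC]
  simp only [RatFunc.smul_eq_C_mul, nsmul_eq_mul, smul_eq_mul, map_neg, map_add, map_mul,
    map_natCast, map_one]
  push_cast
  field_simp
  ring

lemma coord_D (hD : D RatFunc.X = RatFunc.X) [IsAlgClosed C] {α : C} (hα : α ≠ 0) (k : ℕ)
    (f : RatFunc C) :
    coord α (k + 1) (D f) =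
      -((k : C) + 2) * coord α (k + 1) f - ((k : C) + 1) * α * coord α k f := by
  have : (coord α (k + 1)).comp D.toLinearMap =
      (-((k : C) + 2)) • coord α (k + 1) - (((k : C) + 1) * α) • coord α k := by
    refine gen_ext (fun n => ?_) (fun β j hβ => ?_)
    · simp [D_X_zpow D hD, coord_X_zpow hα]
    · simp only [LinearMap.comp_apply, Derivation.coeFn_coe, D_pol D hD, LinearMap.sub_apply,
        LinearMap.smul_apply, map_sub, map_smul, coord_pol, smul_eq_mul]
      by_cases hb : β = α
      · subst hb
        simp only [true_and, add_left_inj]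
        by_cases h1 : j = k + 1
        · subst h1
          simp
          ring
        · by_cases h2 : j = k
          · subst h2
            simp
          · simp [h1, h2]
      · simp [hb]
  simpa using LinearMap.congr_fun this f

lemma coord_D_zero (hD : D RatFunc.X = RatFunc.X) [IsAlgClosed C] {α : C} (hα : α ≠ 0) (f : RatFunc C) :
    coord α 0 (D f) = - coord α 0 f := by
  have : (coord α 0).comp D.toLinearMap = - coord α 0 := by
    refine gen_ext (fun n => ?_) (fun β j hβ => ?_)
    · simp [D_X_zpow D hD, coord_X_zpow hα]
    · simp only [LinearMap.comp_apply, Derivation.coeFn_coe, D_pol D hD, LinearMap.neg_apply,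
        map_sub, map_smul, coord_pol, smul_eq_mul]
      by_cases hj : j = 0
      · subst hj
        by_cases hb : β = α <;> simp [hb]
      · simp [hj]
  simpa using LinearMap.congr_fun this f

/-- Away from `0` and `∞`, `x·d/dx` raises the order of a pole by exactly one. -/
lemma order_iterate_D (hD : D RatFunc.X = RatFunc.X) [IsAlgClosed C] [CharZero C] {α : C}
    (hα : α ≠ 0) {f : RatFunc C} {K : ℕ} (hK : coord α K f ≠ 0)
    (hlt : ∀ j, K < j → coord α j f = 0) (i : ℕ) :
    coord α (K + i) (D^[i] f) ≠ 0 ∧ ∀ j, K + i < j → coord α j (D^[i] f) = 0 := by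
  induction i with
  | zero => exact ⟨hK, hlt⟩
  | succ i ih =>
    obtain ⟨h1, h2⟩ := ih
    rw [Function.iterate_succ_apply', ← add_assoc]
    refine ⟨?_, fun j hj => ?_⟩
    · rw [coord_D D hD hα, h2 _ (Nat.lt_succ_self _), mul_zero, zero_sub, neg_ne_zero]
      exact mul_ne_zero (mul_ne_zero (Nat.cast_add_one_ne_zero _) hα) h1
    · obtain _ | j := j
      · omega
      · rw [coord_D D hD hα, h2 _ (by omega), h2 _ (by omega), mul_zero, mul_zero, sub_zero]

/-- The operator `Σ c_i ∂^i`. -/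
noncomputable def constOp {N : ℕ} (c : Fin (N + 1) → C) : RatFunc C →ₗ[C] RatFunc C :=
  ∑ i, c i • D.toLinearMap ^ (i : ℕ)

lemma constOp_apply {N : ℕ} (c : Fin (N + 1) → C) (f : RatFunc C) :
    constOp D c f = ∑ i, c i • D^[(i : ℕ)] f := by
  simp only [constOp, LinearMap.sum_apply, LinearMap.smul_apply, Module.End.pow_apply]
  rfl

lemma coord_constOp_eq_zero (hD : D RatFunc.X = RatFunc.X) [IsAlgClosed C] {N : ℕ}
    (c : Fin (N + 1) → C) {α : C} (hα : α ≠ 0) {f : RatFunc C} (hf : ∀ k, coord α k f = 0)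
    (k : ℕ) : coord α k (constOp D c f) = 0 := by
  have key (i : ℕ) : ∀ k, coord α k (D^[i] f) = 0 := by
    induction i with
    | zero => exact hf
    | succ i ih =>
      intro k
      rw [Function.iterate_succ_apply']
      obtain _ | k := k
      · rw [coord_D_zero D hD hα, ih, neg_zero]
      · rw [coord_D D hD hα, ih, ih, mul_zero, mul_zero, sub_zero]
  rw [constOp_apply, map_sum]
  exact Finset.sum_eq_zero fun i _ => by rw [map_smul, key, smul_zero]

/-- A nonzero constant-coefficient operator does not remove a pole outside `0` and `∞`. -/
lemma exists_coord_constOp_ne_zero (hD : D RatFunc.X = RatFunc.X) [IsAlgClosed C] [CharZero C]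
    {N : ℕ} {c : Fin (N + 1) → C} (hc : c ≠ 0) {α : C} (hα : α ≠ 0) {f : RatFunc C} {K : ℕ}
    (hK : coord α K f ≠ 0) (hlt : ∀ j, K < j → coord α j f = 0) :
    ∃ k, coord α k (constOp D c f) ≠ 0 := by
  classical
  obtain ⟨i0, hi0⟩ := Function.ne_iff.1 hc
  obtain ⟨d, hd, hmax⟩ := (Finset.univ.filter fun i => c i ≠ 0).exists_max_image id
    ⟨i0, by simpa using hi0⟩
  refine ⟨K + d, ?_⟩
  rw [constOp_apply, map_sum, Finset.sum_eq_single d]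
  · rw [map_smul, smul_eq_mul]
    exact mul_ne_zero (by simpa using hd) (order_iterate_D D hD hα hK hlt d).1
  · intro i _ hi
    by_cases hci : c i = 0
    · rw [hci, zero_smul, map_zero]
    · have hid : i < d := lt_of_le_of_ne (hmax i (by simpa using hci)) hi
      rw [map_smul, (order_iterate_D D hD hα hK hlt i).2 _ (by omega), smul_zero]
  · simp

end Der

/-! ### The automorphism `x ↦ qx` -/

section Sigma

variable {q : C} {σ : RatFunc C ≃ₐ[C] RatFunc C}

lemma q_ne_zero (hσ : σ RatFunc.X = RatFunc.C q * RatFunc.X) : q ≠ 0 := by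
  rintro rfl
  rw [map_zero, zero_mul, map_eq_zero_iff σ σ.injective] at hσ
  exact RatFunc.X_ne_zero hσ

lemma sigma_C (c : C) : σ (RatFunc.C c) = RatFunc.C c := by
  rw [← RatFunc.algebraMap_eq_C]; exact σ.commutes c

lemma sigma_X_zpow (hσ : σ RatFunc.X = RatFunc.C q * RatFunc.X) (n : ℤ) :
    σ (RatFunc.X ^ n) = q ^ n • RatFunc.X ^ n := by
  rw [map_zpow₀, hσ, mul_zpow, RatFunc.smul_eq_C_mul, map_zpow₀]

lemma sigma_pol (hσ : σ RatFunc.X = RatFunc.C q * RatFunc.X) (β : C) (k : ℕ) :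
    σ (pol β k) = (q ^ (k + 1))⁻¹ • pol (β / q) k := by
  have hq := q_ne_zero hσ
  have : RatFunc.C q * RatFunc.X - RatFunc.C β
      = RatFunc.C q * (RatFunc.X - RatFunc.C (β / q)) := by
    rw [mul_sub, ← map_mul, mul_div_cancel₀ _ hq]
  rw [pol, pol, map_inv₀, map_pow, map_sub, hσ, sigma_C, this, mul_pow, mul_inv,
    RatFunc.smul_eq_C_mul, map_inv₀, map_pow]

lemma coord_sigma [IsAlgClosed C] (hσ : σ RatFunc.X = RatFunc.C q * RatFunc.X) {α : C}
    (hα : α ≠ 0) (k : ℕ) (f : RatFunc C) :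
    coord α k (σ f) = (q ^ (k + 1))⁻¹ * coord (α * q) k f := by
  have hq := q_ne_zero hσ
  have : (coord α k).comp σ.toLinearMap = (q ^ (k + 1))⁻¹ • coord (α * q) k := by
    refine gen_ext (fun n => ?_) (fun β j hβ => ?_)
    · simp [sigma_X_zpow hσ, coord_X_zpow hα, coord_X_zpow (mul_ne_zero hα hq)]
    · simp only [LinearMap.comp_apply, AlgEquiv.toLinearMap_apply, sigma_pol hσ,
        LinearMap.smul_apply, map_smul, coord_pol, smul_eq_mul]
      by_cases hj : j = k
      · rw [hj]
        by_cases hb : β = α * q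
        · simp [hb, hq]
        · simp [hb, div_eq_iff hq]
      · simp [hj]
  simpa using LinearMap.congr_fun this f

lemma D_sigma [IsAlgClosed C] (hσ : σ RatFunc.X = RatFunc.C q * RatFunc.X)
    (D : Derivation C (RatFunc C) (RatFunc C)) (hD : D RatFunc.X = RatFunc.X) (f : RatFunc C) :
    D (σ f) = σ (D f) := by
  have hq := q_ne_zero hσ
  have : D.toLinearMap.comp σ.toLinearMap = σ.toLinearMap.comp D.toLinearMap := by
    refine gen_ext (fun n => ?_) (fun β j hβ => ?_)
    · simp only [LinearMap.comp_apply, AlgEquiv.toLinearMap_apply, Derivation.coeFn_coe,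
        sigma_X_zpow hσ, map_smul, D_X_zpow D hD]
      rw [smul_comm]
    · simp only [LinearMap.comp_apply, AlgEquiv.toLinearMap_apply, Derivation.coeFn_coe,
        sigma_pol hσ, map_smul, map_sub, D_pol D hD, smul_sub, smul_smul]
      congr 2
      · ring
      · field_simp
        ring
  exact LinearMap.congr_fun this f

/-- The operator `f ↦ σ f - a f`. -/
noncomputable def twist (σ : RatFunc C ≃ₐ[C] RatFunc C) (a : C) : RatFunc C →ₗ[C] RatFunc C :=
  σ.toLinearMap - a • LinearMap.id

lemma twist_apply (a : C) (f : RatFunc C) : twist σ a f = σ f - a • f := rfl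

lemma constOp_twist [IsAlgClosed C] (hσ : σ RatFunc.X = RatFunc.C q * RatFunc.X)
    (D : Derivation C (RatFunc C) (RatFunc C)) (hD : D RatFunc.X = RatFunc.X) {N : ℕ}
    (c : Fin (N + 1) → C) (a : C) (f : RatFunc C) :
    constOp D c (twist σ a f) = twist σ a (constOp D c f) := by
  have key (i : ℕ) : D^[i] (twist σ a f) = twist σ a (D^[i] f) := by
    induction i with
    | zero => rfl
    | succ i ih =>
      rw [Function.iterate_succ_apply', ih, Function.iterate_succ_apply', twist_apply, twist_apply,
        map_sub, D.map_smul, D_sigma hσ D hD]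
  simp only [constOp_apply, map_sum, map_smul, key]

/-- A finitely supported sequence on `ℤ` that is geometric on each side of one possible break
between `0` and `1` vanishes next to the break. -/
lemma eq_zero_of_geometric {u : ℤ → C} (hu : {n | u n ≠ 0}.Finite) {s : C} (hs : s ≠ 0)
    (h : ∀ n, n ≠ 0 → u (n + 1) = s * u n) : u 0 = 0 ∧ u 1 = 0 := by
  constructor
  · by_contra h0
    have key (m : ℕ) : u (-(m : ℤ)) ≠ 0 := by
      induction m with
      | zero => simpa using h0
      | succ m ih =>
        intro h1
        apply ih
        have := h (-((m + 1 : ℕ) : ℤ)) (by omega)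
        rw [h1, mul_zero] at this
        rw [← this]
        congr 1
        push_cast
        ring
    exact Set.infinite_of_injective_forall_mem (f := fun m : ℕ => -(m : ℤ))
      (fun x y hxy => by simpa using hxy) key hu
  · by_contra h0
    have key (m : ℕ) : u ((m : ℤ) + 1) ≠ 0 := by
      induction m with
      | zero => simpa using h0
      | succ m ih =>
        rw [h _ (by omega)]
        refine mul_ne_zero hs ?_
        push_cast
        exact ih
    exact Set.infinite_of_injective_forall_mem (f := fun m : ℕ => (m : ℤ) + 1)
      (fun x y hxy => by simpa using hxy) key hu

lemma zpow_injective (hq0 : q ≠ 0) (hq : ∀ n : ℕ, 0 < n → q ^ n ≠ 1) :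
    Function.Injective fun n : ℤ => q ^ n := by
  intro m n hmn
  have h1 : q ^ (m - n) = 1 := by
    rw [zpow_sub₀ hq0]; exact (div_eq_one_iff_eq (zpow_ne_zero _ hq0)).2 hmn
  by_contra hne
  refine hq (m - n).natAbs (by omega) ?_
  rcases Int.natAbs_eq (m - n) with h | h
  · rw [h, zpow_natCast] at h1; exact h1
  · rw [h, zpow_neg, zpow_natCast, inv_eq_one] at h1; exact h1

/-- The poles of `σ h - a h` cannot meet a `q`-orbit in a single point. -/
lemma coord_twist_eq_zero [IsAlgClosed C] (hq : ∀ n : ℕ, 0 < n → q ^ n ≠ 1)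
    (hσ : σ RatFunc.X = RatFunc.C q * RatFunc.X) {a : C} (ha : a ≠ 0) {α : C} (hα : α ≠ 0)
    (k : ℕ) {h : RatFunc C} (hh : ∀ n : ℤ, n ≠ 0 → coord (α * q ^ n) k (twist σ a h) = 0) :
    coord α k (twist σ a h) = 0 := by
  have hq0 := q_ne_zero hσ
  have hαq (n : ℤ) : α * q ^ n ≠ 0 := mul_ne_zero hα (zpow_ne_zero _ hq0)
  have hT (n : ℤ) : coord (α * q ^ n) k (twist σ a h) =
      (q ^ (k + 1))⁻¹ * coord (α * q ^ (n + 1)) k h - a * coord (α * q ^ n) k h := by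
    rw [twist_apply, map_sub, coord_sigma hσ (hαq n), map_smul, smul_eq_mul, mul_assoc,
      zpow_add_one₀ hq0]
  have hinj : Function.Injective fun n : ℤ => α * q ^ n :=
    (mul_right_injective₀ hα).comp (zpow_injective hq0 hq)
  have := eq_zero_of_geometric (u := fun n => coord (α * q ^ n) k h) (s := q ^ (k + 1) * a)
    (((finite_coord k h).preimage hinj.injOn).subset fun n hn => ⟨hαq n, hn⟩)
    (mul_ne_zero (pow_ne_zero _ hq0) ha) (fun n hn => by
      have h1 := hT n
      rw [hh n hn, eq_comm, sub_eq_zero, inv_mul_eq_iff_eq_mul₀ (pow_ne_zero _ hq0)] at h1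
      simpa only [mul_assoc] using h1)
  have h0 := hT 0
  simp only [zero_add, zpow_zero, mul_one] at h0 this
  rw [h0, this.1, this.2, mul_zero, mul_zero, sub_zero]

/-- A choice of one representative in each orbit of multiplication by `q^ℤ`. -/
lemma exists_rep (hq0 : q ≠ 0) : ∃ rep : C → C, (∀ α, ∃ n : ℤ, rep α = α * q ^ n) ∧
    ∀ α (n : ℤ), rep (α * q ^ n) = rep α := by
  let S : Setoid C :=
    { r := fun α β => ∃ n : ℤ, β = α * q ^ n
      iseqv :=
        { refl := fun α => ⟨0, by simp⟩
          symm := by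
            rintro α _ ⟨n, rfl⟩
            exact ⟨-n, by rw [mul_assoc, ← zpow_add₀ hq0]; simp⟩
          trans := by
            rintro α _ _ ⟨n, rfl⟩ ⟨m, rfl⟩
            exact ⟨n + m, by rw [mul_assoc, ← zpow_add₀ hq0]⟩ } }
  refine ⟨fun α => (Quotient.mk S α).out, fun α => ?_, fun α n => ?_⟩
  · exact S.symm (Quotient.mk_out (s := S) α)
  · exact congrArg Quotient.out (Quotient.sound (S.symm ⟨n, rfl⟩))

lemma pol_mul_q_zpow_mem_iff (hσ : σ RatFunc.X = RatFunc.C q * RatFunc.X) {a : C} (ha : a ≠ 0)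
    {R : Submodule C (RatFunc C)} (hR : LinearMap.range (twist σ a) ≤ R) (β : C) (k : ℕ) (n : ℤ) :
    pol (β * q ^ n) k ∈ R ↔ pol β k ∈ R := by
  have hq0 := q_ne_zero hσ
  have step (γ : C) : pol (γ * q) k ∈ R ↔ pol γ k ∈ R := by
    have h1 : twist σ a (pol (γ * q) k) ∈ R := hR ⟨_, rfl⟩
    rw [twist_apply, sigma_pol hσ, mul_div_cancel_right₀ _ hq0] at h1
    rw [← R.smul_mem_iff ha, ← R.smul_mem_iff (inv_ne_zero (pow_ne_zero (k + 1) hq0)) (x := pol γ k)]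
    exact ⟨fun h => by simpa using add_mem h1 h, fun h => by simpa using sub_mem h h1⟩
  induction n using Int.induction_on with
  | zero => simp
  | succ n ih => rw [zpow_add_one₀ hq0, ← mul_assoc, step]; exact ih
  | pred n ih =>
    refine Iff.trans ?_ ih
    rw [← step (β * q ^ (-(n : ℤ) - 1)), mul_assoc, ← zpow_add_one₀ hq0, sub_add_cancel]

/-- Modulo the image of `σ - a`, a Laurent monomial is killed unless it lies in the kernel of
`σ - a`, and a pole can be moved along its `q`-orbit to the chosen representative. -/
lemma decomposition [IsAlgClosed C] (hσ : σ RatFunc.X = RatFunc.C q * RatFunc.X) {a : C}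
    (ha : a ≠ 0) {rep : C → C} (h1 : ∀ α, ∃ n : ℤ, rep α = α * q ^ n)
    (h2 : ∀ α (n : ℤ), rep (α * q ^ n) = rep α) :
    LinearMap.range (twist σ a) ⊔
      (Submodule.span C ((fun n : ℤ => (RatFunc.X : RatFunc C) ^ n) '' {n | q ^ n = a}) ⊔
      Submodule.span C (Set.range fun i : {α : C // α ≠ 0 ∧ rep α = α} × ℕ =>
        pol (i.1 : C) i.2)) = ⊤ := by
  have hq0 := q_ne_zero hσ
  set R := LinearMap.range (twist σ a) ⊔
      (Submodule.span C ((fun n : ℤ => (RatFunc.X : RatFunc C) ^ n) '' {n | q ^ n = a}) ⊔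
      Submodule.span C (Set.range fun i : {α : C // α ≠ 0 ∧ rep α = α} × ℕ =>
        pol (i.1 : C) i.2)) with hRdef
  have hR : LinearMap.range (twist σ a) ≤ R := le_sup_left
  rw [eq_top_iff, ← span_gens, Submodule.span_le]
  rintro _ (⟨n, rfl⟩ | ⟨β, k, hβ, rfl⟩)
  · by_cases hn : q ^ n = a
    · exact Submodule.mem_sup_right (Submodule.mem_sup_left (Submodule.subset_span ⟨n, hn, rfl⟩))
    · have : twist σ a (RatFunc.X ^ n) ∈ R := hR ⟨_, rfl⟩
      rw [twist_apply, sigma_X_zpow hσ, ← sub_smul] at this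
      exact (R.smul_mem_iff (sub_ne_zero.2 hn)).1 this
  · obtain ⟨n, hn⟩ := h1 β
    change pol β k ∈ R
    rw [← pol_mul_q_zpow_mem_iff hσ ha hR β k n, ← hn]
    refine Submodule.mem_sup_right (Submodule.mem_sup_right (Submodule.subset_span ?_))
    refine ⟨(⟨rep β, ?_, ?_⟩, k), rfl⟩
    · rw [hn]; exact mul_ne_zero hβ (zpow_ne_zero _ hq0)
    · conv_lhs => rw [hn, h2]

end Sigma

/-! ### The descent -/

/-- The common core of both cases: up to the image of `σ - a`, the element `b` lies in the span of
the monomials killed by `σ - a`. -/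
lemma exists_eq_twist_add [IsAlgClosed C] [CharZero C]
    {q : C} (hq : ∀ n : ℕ, 0 < n → q ^ n ≠ 1)
    {σ : RatFunc C ≃ₐ[C] RatFunc C} (hσ : σ RatFunc.X = RatFunc.C q * RatFunc.X)
    (D : Derivation C (RatFunc C) (RatFunc C)) (hD : D RatFunc.X = RatFunc.X)
    {a : C} (ha : a ≠ 0) {b : RatFunc C} {N : ℕ} {c : Fin (N + 1) → C} (hc : c ≠ 0)
    {h : RatFunc C} (heq : constOp D c b = twist σ a h) :
    ∃ e, ∃ m ∈ Submodule.span C ((fun n : ℤ => (RatFunc.X : RatFunc C) ^ n) '' {n | q ^ n = a}),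
      b = twist σ a e + m := by
  have hq0 := q_ne_zero hσ
  obtain ⟨rep, h1, h2⟩ := exists_rep hq0
  have hb : b ∈ (⊤ : Submodule C (RatFunc C)) := trivial
  rw [← decomposition hσ ha h1 h2] at hb
  obtain ⟨_, ⟨e, rfl⟩, _, hmw, rfl⟩ := Submodule.mem_sup.1 hb
  obtain ⟨m, hm, w, hw, rfl⟩ := Submodule.mem_sup.1 hmw
  refine ⟨e, m, hm, ?_⟩
  suffices w = 0 by rw [this, add_zero]
  obtain ⟨l, rfl⟩ := (Finsupp.mem_span_range_iff_exists_finsupp).1 hw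
  -- coordinates of the part supported at representatives
  have hcoord (i : {α : C // α ≠ 0 ∧ rep α = α} × ℕ) :
      coord (i.1 : C) i.2 (l.sum fun i t => t • pol (i.1 : C) i.2) = l i := by
    classical
    rw [Finsupp.sum, map_sum, Finset.sum_eq_single i]
    · simp [coord_pol_self]
    · intro j _ hj
      rw [map_smul, coord_pol, if_neg, smul_zero]
      rintro ⟨h3, h4⟩
      exact hj (Prod.ext (Subtype.ext h3) h4)
    · intro hi
      simp [Finsupp.notMem_support_iff.1 hi]
  have hcoord' (α : C) (hα : rep α ≠ α) (k : ℕ) :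
      coord α k (l.sum fun i t => t • pol (i.1 : C) i.2) = 0 := by
    rw [Finsupp.sum, map_sum]
    refine Finset.sum_eq_zero fun j _ => ?_
    rw [map_smul, coord_pol_of_ne, smul_zero]
    rintro rfl
    exact hα j.1.2.2
  set w := l.sum fun i t => t • pol (i.1 : C) i.2 with hwdef
  have hm0 (α : C) (hα : α ≠ 0) (k : ℕ) : coord α k m = 0 := by
    have : Submodule.span C ((fun n : ℤ => (RatFunc.X : RatFunc C) ^ n) '' {n | q ^ n = a}) ≤
        LinearMap.ker (coord α k) := by
      rw [Submodule.span_le]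
      rintro _ ⟨n, -, rfl⟩
      exact coord_X_zpow hα k n
    exact this hm
  have hLw (α : C) (hα : α ≠ 0) (k : ℕ) :
      coord α k (constOp D c w) = coord α k (twist σ a (h - constOp D c e)) := by
    rw [map_sub, ← heq, map_add, map_add, constOp_twist hσ D hD, add_sub_cancel_left, map_add,
      coord_constOp_eq_zero D hD c hα (hm0 α hα), zero_add]
  suffices l = 0 by rw [hwdef, this, Finsupp.sum_zero_index]
  by_contra hl
  obtain ⟨⟨⟨α, hα, hrep⟩, k0⟩, hk0⟩ := Finsupp.ne_iff.1 hl
  -- the order of the pole of `w` at `α`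
  have hfin : {k : ℕ | coord α k w ≠ 0}.Finite := by
    refine (l.support.finite_toSet.image Prod.snd).subset fun k hk => ?_
    refine ⟨(⟨α, hα, hrep⟩, k), ?_, rfl⟩
    have := hcoord (⟨α, hα, hrep⟩, k)
    simp only at this
    simpa [← this] using hk
  obtain ⟨K, hK, hmax⟩ := hfin.exists_maximal (s := {k : ℕ | coord α k w ≠ 0})
    ⟨k0, by
      have := hcoord (⟨α, hα, hrep⟩, k0)
      simp only at this
      rw [Set.mem_ofPred_eq, this]
      exact hk0⟩
  obtain ⟨k, hk⟩ := exists_coord_constOp_ne_zero D hD hc hα hK (fun j hj => by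
    by_contra hne
    exact absurd (hmax hne hj.le) (not_le.2 hj))
  rw [hLw α hα] at hk
  refine hk (coord_twist_eq_zero hq hσ ha hα k fun n hn => ?_)
  have hαn : α * q ^ n ≠ 0 := mul_ne_zero hα (zpow_ne_zero _ hq0)
  rw [← hLw _ hαn]
  refine coord_constOp_eq_zero D hD c hαn (hcoord' _ ?_) k
  -- two representatives in the same orbit coincide
  rw [h2, hrep]
  intro h3
  refine hn (zpow_injective hq0 hq ?_)
  rw [eq_comm, mul_eq_left₀ hα] at h3
  simpa using h3

end DescentQ

/-- Descent lemma for `σ(x) = q·x`, `q` not a root of unity, with `∂ = x·d/dx` on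
`C(x)` and `a ∈ C` nonzero.  Suppose `L(b) = σ(h) - a·h` for some `h ∈ C(x)` and some
nonzero constant-coefficient operator `L = Σ c_i ∂^i`.  Then (a) if `a = q^r` for some
`r ∈ ℤ`, there are `e ∈ C(x)` and `c ∈ C` with `b = σ(e) - a·e + c·x^r`; (b) if `a` is
not an integer power of `q`, there is `e ∈ C(x)` with `b = σ(e) - a·e`. -/
theorem descent_q {C : Type*} [Field C] [IsAlgClosed C] [CharZero C]
    (q : C) (hq : ∀ n : ℕ, 0 < n → q ^ n ≠ 1)
    (σ : RatFunc C ≃ₐ[C] RatFunc C) (hσ : σ RatFunc.X = RatFunc.C q * RatFunc.X)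
    (D : Derivation C (RatFunc C) (RatFunc C)) (hD : D RatFunc.X = RatFunc.X)
    (a : C) (ha : a ≠ 0) (b : RatFunc C)
    (N : ℕ) (c : Fin (N + 1) → C) (hc : c ≠ 0) (h : RatFunc C)
    (heq : ∑ i : Fin (N + 1), RatFunc.C (c i) * (⇑D)^[(i : ℕ)] b
        = σ h - RatFunc.C a * h) :
    (∀ r : ℤ, a = q ^ r →
      ∃ (e : RatFunc C) (cc : C),
        b = σ e - RatFunc.C a * e + RatFunc.C cc * RatFunc.X ^ r) ∧
    ((¬∃ r : ℤ, a = q ^ r) → ∃ e : RatFunc C, b = σ e - RatFunc.C a * e) := by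
  simp only [← RatFunc.smul_eq_C_mul] at heq ⊢
  rw [← DescentQ.constOp_apply] at heq
  obtain ⟨e, m, hm, rfl⟩ := DescentQ.exists_eq_twist_add hq hσ D hD ha hc heq
  refine ⟨fun r hr => ?_, fun hr => ?_⟩
  · have hset : {n : ℤ | q ^ n = a} = {r} := by
      ext n
      rw [hr]
      exact (DescentQ.zpow_injective (DescentQ.q_ne_zero hσ) hq).eq_iff
    rw [hset, Set.image_singleton, Submodule.mem_span_singleton] at hm
    obtain ⟨cc, rfl⟩ := hm
    exact ⟨e, cc, rfl⟩
  · have hset : {n : ℤ | q ^ n = a} = ∅ :=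
      Set.eq_empty_of_forall_notMem fun n hn => hr ⟨n, hn.symm⟩
    rw [hset, Set.image_empty, Submodule.span_empty, Submodule.mem_bot] at hm
    exact ⟨e, by rw [hm, add_zero]; rfl⟩
end

section
/- Let k be a field, let τ be a field automorphism of k, let a ∈ k be nonzero, and let σ be the field automorphism of the rational function field k(u) (u transcendental over k) that extends τ and satisfies σ(u) = a·u. Let b, h ∈ k. If there exists w ∈ k(u) with σ(w) − b·w = h, then there exists y ∈ k with σ(y) − b·y = h. -/
/-!
Expand a solution `w` at `u = 0`: the automorphism `σ` acts on Laurent series by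
`∑ cₙ uⁿ ↦ ∑ τ(cₙ) aⁿ uⁿ`, so it acts as `τ` on constant coefficients, and the constant
coefficient of `w` is a solution in `k`.

The argument is carried out with power series only. Write `w = p / (u ^ m * q)` with `q(0) ≠ 0` and
let `P` be the power series of `p / q`, so that the constant coefficient of `w` is the `m`-th
coefficient of `P`. Clearing denominators turns the equation for `w` into
`φ(P) - b a ^ m P = h a ^ m u ^ m`, where `φ` is the twisted map `twist` below.
-/

/-- The endomorphism `∑ cₙ Xⁿ ↦ ∑ aⁿ τ(cₙ) Xⁿ` of the power series ring. -/
noncomputable def twist {k : Type*} [Field k] (τ : k ≃+* k) (a : k) :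
    PowerSeries k →+* PowerSeries k :=
  (PowerSeries.rescale a).comp (PowerSeries.map (τ : k →+* k))

theorem coeff_twist {k : Type*} [Field k] (τ : k ≃+* k) (a : k) (n : ℕ) (f : PowerSeries k) :
    PowerSeries.coeff n (twist τ a f) = a ^ n * τ (PowerSeries.coeff n f) := by
  simp [twist, PowerSeries.coeff_rescale]

/-- The polynomial form of `twist`: it acts by `τ` on constants and sends `X` to `a X`. -/
noncomputable def polyTwist {k : Type*} [Field k] (τ : k ≃+* k) (a : k) :
    Polynomial k →+* Polynomial k :=
  Polynomial.eval₂RingHom (Polynomial.C.comp (τ : k →+* k)) (Polynomial.C a * Polynomial.X)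

theorem coe_polyTwist {k : Type*} [Field k] (τ : k ≃+* k) (a : k) (p : Polynomial k) :
    ((polyTwist τ a p : Polynomial k) : PowerSeries k) = twist τ a (p : PowerSeries k) := by
  have key : (Polynomial.coeToPowerSeries.ringHom (R := k)).comp (polyTwist τ a) =
      (twist τ a).comp Polynomial.coeToPowerSeries.ringHom := by
    ext1
    · ext c n
      rcases n with _ | n <;> simp [polyTwist, twist, PowerSeries.coeff_rescale, PowerSeries.coeff_C]
    · simp [polyTwist, twist, PowerSeries.rescale_X]
  exact RingHom.congr_fun key p

/-- On polynomials, `σ` is `polyTwist`. -/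
theorem map_algebraMap_eq_polyTwist {k : Type*} [Field k] (τ : k ≃+* k) (a : k)
    (σ : RatFunc k ≃+* RatFunc k)
    (hσC : ∀ c : k, σ (RatFunc.C c) = RatFunc.C (τ c))
    (hσX : σ RatFunc.X = RatFunc.C a * RatFunc.X) (p : Polynomial k) :
    σ (algebraMap (Polynomial k) (RatFunc k) p) =
      algebraMap (Polynomial k) (RatFunc k) (polyTwist τ a p) := by
  have key : (σ : RatFunc k →+* RatFunc k).comp (algebraMap (Polynomial k) (RatFunc k)) =
      (algebraMap (Polynomial k) (RatFunc k)).comp (polyTwist τ a) := by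
    ext1
    · ext1 c
      simp [polyTwist, hσC]
    · simp [polyTwist, hσX]
  exact RingHom.congr_fun key p

/-- Descent for first order difference equations: let `σ` be the automorphism of
`k(u)` extending an automorphism `τ` of `k` with `σ(u) = a·u`, `a ∈ k` nonzero.  If
`σ(w) - b·w = h` has a solution `w ∈ k(u)` with `b, h ∈ k`, then it has a solution in
`k`. -/
theorem descent_to_base_field {k : Type*} [Field k]
    (τ : k ≃+* k) (a : k) (ha : a ≠ 0)
    (σ : RatFunc k ≃+* RatFunc k)
    (hσC : ∀ c : k, σ (RatFunc.C c) = RatFunc.C (τ c))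
    (hσX : σ RatFunc.X = RatFunc.C a * RatFunc.X)
    (b h : k)
    (hw : ∃ w : RatFunc k, σ w - RatFunc.C b * w = RatFunc.C h) :
    ∃ y : k, τ y - b * y = h := by
  obtain ⟨w, hw⟩ := hw
  obtain ⟨q, hq, hqd⟩ := Polynomial.exists_eq_pow_rootMultiplicity_mul_and_not_dvd
    w.denom w.denom_ne_zero 0
  generalize Polynomial.rootMultiplicity 0 w.denom = m at hq
  rw [Polynomial.C_0, sub_zero] at hq hqd
  have hq0 : q.coeff 0 ≠ 0 := fun e => hqd (Polynomial.X_dvd_iff.2 e)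
  have hqne : q ≠ 0 := by
    rintro rfl
    simp at hq0
  have hinj := RatFunc.algebraMap_injective k
  have hσp := map_algebraMap_eq_polyTwist τ a σ hσC hσX
  set p := w.num
  have hwpq : w = algebraMap (Polynomial k) (RatFunc k) p /
      (RatFunc.X ^ m * algebraMap (Polynomial k) (RatFunc k) q) := by
    rw [← RatFunc.num_div_denom w, hq, map_mul, map_pow, RatFunc.algebraMap_X]
  have hq' : algebraMap (Polynomial k) (RatFunc k) q ≠ 0 :=
    RatFunc.algebraMap_ne_zero hqne
  have htq' : algebraMap (Polynomial k) (RatFunc k) (polyTwist τ a q) ≠ 0 := by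
    rw [← hσp]
    exact (map_ne_zero σ).2 hq'
  have hX : (RatFunc.X : RatFunc k) ≠ 0 := RatFunc.X_ne_zero
  have haC : (RatFunc.C a : RatFunc k) ≠ 0 := (map_ne_zero _).2 ha
  have hpoly : polyTwist τ a p * q - Polynomial.C (b * a ^ m) * p * polyTwist τ a q =
      Polynomial.C (h * a ^ m) * Polynomial.X ^ m * polyTwist τ a q * q := by
    apply hinj
    rw [hwpq, map_div₀, map_mul, map_pow, hσX, hσp, hσp] at hw
    simp only [map_sub, map_mul, map_pow, RatFunc.algebraMap_X, RatFunc.algebraMap_C]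
    field_simp at hw
    apply mul_left_cancel₀ (pow_ne_zero m hX)
    linear_combination hw
  have hser := congrArg (fun f : Polynomial k => (f : PowerSeries k)) hpoly
  simp only [Polynomial.coe_sub, Polynomial.coe_mul, Polynomial.coe_pow, Polynomial.coe_C,
    Polynomial.coe_X, coe_polyTwist] at hser
  have hqc : PowerSeries.constantCoeff (q : PowerSeries k) ≠ 0 := by
    simpa using hq0
  obtain ⟨P, hP⟩ : ∃ P : PowerSeries k, (p : PowerSeries k) = P * (q : PowerSeries k) :=
    ⟨p * (q : PowerSeries k)⁻¹, by rw [mul_assoc, PowerSeries.inv_mul_cancel _ hqc, mul_one]⟩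
  have hqs : (q : PowerSeries k) ≠ 0 := by
    intro e
    simp [e] at hqc
  have htqs : twist τ a (q : PowerSeries k) ≠ 0 := by
    rw [← coe_polyTwist]
    intro e
    rw [Polynomial.coe_eq_zero_iff] at e
    simp [e] at htq'
  rw [hP, map_mul] at hser
  have hfin : twist τ a P - PowerSeries.C (b * a ^ m) * P =
      PowerSeries.C (h * a ^ m) * PowerSeries.X ^ m := by
    apply mul_right_cancel₀ (mul_ne_zero htqs hqs)
    linear_combination hser
  have hc := congrArg (PowerSeries.coeff m) hfin
  rw [map_sub, coeff_twist, PowerSeries.coeff_C_mul, PowerSeries.coeff_C_mul,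
    PowerSeries.coeff_X_pow_self] at hc
  refine ⟨PowerSeries.coeff m P, ?_⟩
  apply mul_left_cancel₀ (pow_ne_zero m ha)
  linear_combination hc
end

section
/- Let K be a field of characteristic 0 and k a subfield. Let Σ be a set of field automorphisms of K each of which maps k onto k, and let Δ be a set of derivations of K each of which maps k into k. Set K^{ΣΔ} = {c ∈ K : σ(c) = c for all σ ∈ Σ and δ(c) = 0 for all δ ∈ Δ} and k^{ΣΔ} = k ∩ K^{ΣΔ}. Then k and K^{ΣΔ} are linearly disjoint over k^{ΣΔ}; that is, every finite family of elements of K^{ΣΔ} that is linearly independent over k^{ΣΔ} remains linearly independent over k. Equivalently, if c_1, …, c_n ∈ K^{ΣΔ} satisfy a nontrivial linear relation Σ a_i c_i = 0 with a_i ∈ k, then they satisfy a nontrivial linear relation with coefficients in k^{ΣΔ}. -/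
/-!
Among all nontrivial relations `∑ a i * c i = 0` over `k`, choose one of minimal support and
scale it so that some coefficient is `1`. Applying `σ ∈ S` and subtracting, or applying `δ ∈ Δ`,
gives another relation over `k`, because the `c i` are constants. Its support is strictly smaller,
since `σ 1 - 1 = 0` and `δ 1 = 0`, so by minimality it is trivial. Hence the coefficients of the
scaled relation are themselves constants.
-/

/-- `k` and `K^{ΣΔ}` are linearly disjoint over `k^{ΣΔ}`: if constants
`c_1, …, c_n ∈ K^{ΣΔ}` satisfy a nontrivial linear relation with coefficients in `k`,
then they satisfy a nontrivial linear relation with coefficients in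
`k^{ΣΔ} = k ∩ K^{ΣΔ}`.  Here `Σ` is a set of field automorphisms of `K` mapping `k`
onto `k` and `Δ` a set of derivations of `K` mapping `k` into `k`. -/
theorem constants_linearly_disjoint {K : Type*} [Field K] [CharZero K]
    (k : Subfield K)
    (S : Set (K ≃+* K)) (hS : ∀ σ ∈ S, (⇑σ) '' (k : Set K) = (k : Set K))
    (Δ : Set (Derivation ℤ K K)) (hΔ : ∀ δ ∈ Δ, ∀ x ∈ k, δ x ∈ k)
    (n : ℕ) (c : Fin n → K)
    (hc : ∀ i, (∀ σ ∈ S, σ (c i) = c i) ∧ (∀ δ ∈ Δ, δ (c i) = 0))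
    (a : Fin n → K) (hak : ∀ i, a i ∈ k) (hane : a ≠ 0)
    (hrel : ∑ i : Fin n, a i * c i = 0) :
    ∃ a' : Fin n → K,
      (∀ i, a' i ∈ k ∧ (∀ σ ∈ S, σ (a' i) = a' i) ∧ (∀ δ ∈ Δ, δ (a' i) = 0)) ∧
      a' ≠ 0 ∧ ∑ i : Fin n, a' i * c i = 0 := by
  let R : Set (Fin n → K) := {b | (∀ i, b i ∈ k) ∧ b ≠ 0 ∧ ∑ i, b i * c i = 0}
  obtain ⟨b, ⟨hbk, hb0, hbrel⟩, hmin⟩ :=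
    (InvImage.wf (fun b : Fin n → K => (Function.support b).ncard) wellFounded_lt).has_min R
      ⟨a, hak, hane, hrel⟩
  obtain ⟨j, hj⟩ := Function.ne_iff.mp hb0
  rw [Pi.zero_apply] at hj
  -- A relation supported in `supp b` but vanishing at `j` is trivial.
  have key : ∀ d : Fin n → K, (∀ i, d i ∈ k) → ∑ i, d i * c i = 0 →
      (∀ i, b i = 0 → d i = 0) → d j = 0 → ∀ i, d i = 0 := by
    intro d hdk hdrel hsub hdj
    by_contra hne
    refine hmin d ⟨hdk, fun h => hne (congrFun h), hdrel⟩ ?_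
    refine Set.ncard_lt_ncard ⟨fun i hi hbi => hi (hsub i hbi), fun h => ?_⟩ (Set.toFinite _)
    exact h (show j ∈ Function.support b from hj) hdj
  have hek : ∀ i, b i / b j ∈ k := fun i => k.div_mem (hbk i) (hbk j)
  have herel : ∑ i, b i / b j * c i = 0 := by
    simp_rw [div_mul_eq_mul_div]
    rw [← Finset.sum_div, hbrel, zero_div]
  refine ⟨fun i => b i / b j, fun i => ⟨hek i, fun σ hσ => ?_, fun δ hδ => ?_⟩, ?_, herel⟩
  · refine sub_eq_zero.mp (key (fun i => σ (b i / b j) - b i / b j) (fun i => ?_) ?_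
      (fun i hi => by simp [hi]) (by simp [div_self hj]) i)
    · exact k.sub_mem ((hS σ hσ).subset (Set.mem_image_of_mem σ (hek i))) (hek i)
    · have h := congrArg σ herel
      rw [map_sum, map_zero] at h
      simp_rw [sub_mul]
      rw [Finset.sum_sub_distrib, herel, sub_zero, ← h]
      exact Finset.sum_congr rfl fun i _ => by rw [map_mul, (hc i).1 σ hσ]
  · refine key (fun i => δ (b i / b j)) (fun i => hΔ δ hδ _ (hek i)) ?_
      (fun i hi => by simp [hi]) (by simp [div_self hj]) i
    have h := congrArg δ herel
    rw [map_sum, map_zero] at h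
    rw [← h]
    refine Finset.sum_congr rfl fun i _ => ?_
    rw [Derivation.leibniz, (hc i).2 δ hδ, smul_zero, zero_add, smul_eq_mul, mul_comm]
  · intro h
    simpa [div_self hj] using congrFun h j
end
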